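/- Let (R, m) be a Gorenstein Noetherian local ring and let I be an ideal of R of height 3 such that: I has finite projective dimension as an R-module; I is generically a complete intersection (i.e., for every associated prime p of I, the ideal I_p of the local ring R_p is generated by a regular sequence); and the quotient ring R/I is Gorenstein. Then I is syzygetic. -/

import Mathlib

universe u

open TensorProduct in
/-- An ideal `I` of a commutative ring `R` is *syzygetic* if the complex
`∧²(I) → I ⊗ I → I² → 0` is exact, where the first map sends `u ∧ v` to `v ⊗ u - u ⊗ v`
and the second map is induced by multiplication. Equivalently, the multiplication map
`I ⊗ I → R` has range `I²` and kernel spanned by the elements `b ⊗ a - a ⊗ b`. -/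
def Ideal.IsSyzygetic {R : Type*} [CommRing R] (I : Ideal R) : Prop :=
  LinearMap.range (Submodule.mulMap I I) = I * I ∧
    LinearMap.ker (Submodule.mulMap I I) =
      Submodule.span R {w : I ⊗[R] I | ∃ a b : I, w = b ⊗ₜ a - a ⊗ₜ b}

open CategoryTheory in
/-- A commutative ring `S` is a *Gorenstein (Noetherian local) ring* if it is Noetherian,
local, and has finite injective dimension as a module over itself; the latter is expressed
by the vanishing of `Ext^i(M, S)` for all `S`-modules `M` and all `i` beyond some bound. -/
def IsGorensteinLocalRing (S : Type u) [CommRing S] : Prop :=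
  IsNoetherianRing S ∧ IsLocalRing S ∧
    ∃ n : ℕ, ∀ (M : ModuleCat.{u} S) (i : ℕ), n < i →
      Subsingleton (((Ext S (ModuleCat.{u} S) i).obj (Opposite.op M)).obj (ModuleCat.of S S))

/-- The height of an ideal `I`: the infimum of the heights of the prime ideals
containing `I`. -/
noncomputable def idealHeight {R : Type*} [CommRing R] (I : Ideal R) : ℕ∞ :=
  ⨅ (p : PrimeSpectrum R) (_ : I ≤ p.asIdeal), Order.height p

open CategoryTheory in
/-- The `R`-module `M` has projective dimension at most `n`:
`Ext^i(M, N) = 0` for all modules `N` and all `i > n`. -/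
def projectiveDimensionLE (R : Type u) [CommRing R] (M : ModuleCat.{u} R) (n : ℕ) : Prop :=
  ∀ (N : ModuleCat.{u} R) (i : ℕ), n < i →
    Subsingleton (((Ext R (ModuleCat.{u} R) i).obj (Opposite.op M)).obj N)


section fileV7
set_option linter.unusedSectionVars false
open Matrix

namespace Syz

section V7
variable {R : Type*} [CommRing R] {ι : Type*} [Fintype ι] [DecidableEq ι]

/-- alternating matrices -/
def Alt (A : Matrix ι ι R) : Prop := Aᵀ = -A ∧ ∀ i, A i i = 0

/-- regular sequence of length three, elementwise -/
structure Reg3 (a b c : R) : Prop where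
  r1 : ∀ v : R, a * v = 0 → v = 0
  r2 : ∀ v w : R, b * v = a * w → ∃ y, v = a * y
  r3 : ∀ v w w' : R, c * v = a * w + b * w' → ∃ y y', v = a * y + b * y'

lemma Alt.add {A B : Matrix ι ι R} (hA : Alt A) (hB : Alt B) : Alt (A + B) := by
  refine ⟨by rw [transpose_add, hA.1, hB.1]; abel, fun i => by simp [hA.2 i, hB.2 i]⟩

lemma Alt.smul {A : Matrix ι ι R} (hA : Alt A) (r : R) : Alt (r • A) := by
  refine ⟨by rw [transpose_smul, hA.1]; simp, fun i => by simp [hA.2 i]⟩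

lemma Alt.neg {A : Matrix ι ι R} (hA : Alt A) : Alt (-A) := by
  refine ⟨by rw [transpose_neg, hA.1], fun i => by simp [hA.2 i]⟩

lemma Alt.sub {A B : Matrix ι ι R} (hA : Alt A) (hB : Alt B) : Alt (A - B) := by
  rw [sub_eq_add_neg]; exact hA.add hB.neg

lemma alt_sub_transpose (Z : Matrix ι ι R) : Alt (Z - Zᵀ) := by
  refine ⟨by simp, fun i => by simp⟩

lemma Alt.dot {A : Matrix ι ι R} (hA : Alt A) (v : ι → R) : v ⬝ᵥ (A *ᵥ v) = 0 := by
  simp only [dotProduct, mulVec, Finset.mul_sum]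
  rw [← Finset.sum_product']
  refine Finset.sum_involution (fun p _ => (p.2, p.1)) ?_ ?_ (by simp) (by simp)
  · rintro ⟨i, j⟩ _
    have : A j i = - A i j := by simpa using congrFun (congrFun hA.1 i) j
    simp [this]; ring
  · rintro ⟨i, j⟩ _ h e
    simp only [Prod.mk.injEq] at e
    apply h
    simp [e.1, hA.2]

lemma alt_of_dot {A : Matrix ι ι R} (h : ∀ v : ι → R, v ⬝ᵥ (A *ᵥ v) = 0) : Alt A := by
  have hd : ∀ i, A i i = 0 := fun i => by
    simpa using h (Pi.single i 1)
  refine ⟨?_, hd⟩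
  ext i j
  have := h (Pi.single i 1 + Pi.single j 1)
  simp [mulVec_add, hd] at this
  simp
  linear_combination this

lemma Alt.conj {A : Matrix ι ι R} (hA : Alt A) (N : Matrix ι ι R) : Alt (Nᵀ * A * N) := by
  apply alt_of_dot
  intro v
  rw [← mulVec_mulVec, ← mulVec_mulVec, dotProduct_mulVec, vecMul_transpose, hA.dot]

variable {Φ : Matrix ι ι R} {x : ι → R}

lemma vecMul_x (hΦ : Alt Φ)
    (hx : Φ *ᵥ x = 0)
    : x ᵥ* Φ = 0 := by
  have : x ᵥ* Φ = Φᵀ *ᵥ x := by rw [mulVec_transpose]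
  rw [this, hΦ.1, neg_mulVec, hx, neg_zero]

lemma exists_mul_of_vecMul (hker : ∀ v : ι → R, x ⬝ᵥ v = 0 → ∃ w, v = Φ *ᵥ w)
    (Y : Matrix ι ι R) (h : x ᵥ* Y = 0) : ∃ N, Y = Φ * N := by
  have : ∀ j, ∃ w, Y.col j = Φ *ᵥ w := fun j => hker _ (congrFun h j)
  choose w hw using this
  refine ⟨Matrix.of fun i j => w j i, ?_⟩
  ext i j
  have := congrFun (hw j) i
  simpa [mul_apply, mulVec, dotProduct] using this

lemma V7b' (hker2 : ∀ v : ι → R, Φ *ᵥ v = 0 → ∃ r : R, v = r • x)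
    {a : R} {α : ι → R} (hα : α ⬝ᵥ x = a) (ha : ∀ v : R, a * v = 0 → v = 0)
    {A : Matrix ι ι R} (hA : Alt A) (h : Φ * A = 0) : A = 0 := by
  have : ∀ j, ∃ r : R, A.col j = r • x := fun j => hker2 _ (by
    ext i
    simpa [mul_apply, mulVec, dotProduct] using congrFun (congrFun h i) j)
  choose z hz using this
  have hAz : A = vecMulVec x z := by
    ext i j
    have := congrFun (hz j) i
    simp [vecMulVec_apply] at this ⊢
    rw [this]; ring
  have hd : ∀ v : ι → R, (v ⬝ᵥ x) * (z ⬝ᵥ v) = 0 := fun v => by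
    have := hA.dot v
    rw [hAz, vecMulVec_mulVec] at this
    rw [mul_comm]
    simpa [dotProduct_smul] using this
  have h0 : z ⬝ᵥ α = 0 := ha _ (by have := hd α; rwa [hα] at this)
  have hz0 : ∀ v, z ⬝ᵥ v = 0 := fun v => by
    have h1 := hd (α + v)
    have h2 := hd v
    simp only [add_dotProduct, dotProduct_add, h0, hα] at h1
    apply ha
    linear_combination h1 - h2
  have : z = 0 := by
    ext i
    simpa using hz0 (Pi.single i 1)
  rw [hAz, this]; ext; simp [vecMulVec_apply]

/-- multiplication by `a ^ 2` kills the middle homology -/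
lemma V7a_aux (hΦ : Alt Φ)
    (hx : Φ *ᵥ x = 0)
    (hker : ∀ v : ι → R, x ⬝ᵥ v = 0 → ∃ w, v = Φ *ᵥ w)
    (hker2 : ∀ v : ι → R, Φ *ᵥ v = 0 → ∃ r : R, v = r • x)
    {a : R} {α : ι → R} (hα : α ⬝ᵥ x = a)
    (Y : Matrix ι ι R) (h0 : x ᵥ* Y = 0) (hY : Alt (Y * Φ)) :
    ∃ A, Alt A ∧ (a ^ 2) • Y = Φ * A := by
  obtain ⟨N, rfl⟩ := exists_mul_of_vecMul hker Y h0
  obtain ⟨M, hM⟩ := exists_mul_of_vecMul (Φ := Φ) hker (a • (1 : Matrix ι ι R) - vecMulVec α x) (by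
    simp [vecMul_sub, vecMul_smul, vecMul_vecMulVec, dotProduct_comm x α, hα])
  obtain ⟨n, hn⟩ := hker (Φ *ᵥ (N *ᵥ α)) (by rw [dotProduct_mulVec, vecMul_x hΦ hx]; simp)
  have hMt : Mᵀ * Φ = - (a • (1 : Matrix ι ι R) - vecMulVec x α) := by
    have := congrArg transpose hM
    rw [transpose_mul, hΦ.1] at this
    simp [transpose_vecMulVec] at this
    rw [this]; simp
  have hA1 := hY.conj M
  refine ⟨-(Mᵀ * (Φ * N * Φ) * M) + a • (vecMulVec n x - (vecMulVec n x)ᵀ),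
    hA1.neg.add ((alt_sub_transpose _).smul _), ?_⟩
  have e1 : Mᵀ * (Φ * N * Φ) * M = (Mᵀ * Φ) * N * (Φ * M) := by simp only [Matrix.mul_assoc]
  have z : vecMulVec (0 : ι → R) α = 0 := by ext; simp [vecMulVec_apply]
  have z' : vecMulVec (0 : ι → R) n = 0 := by ext; simp [vecMulVec_apply]
  have e3 : Φ * (vecMulVec n x - (vecMulVec n x)ᵀ) = vecMulVec (Φ *ᵥ (N *ᵥ α)) x := by
    rw [Matrix.mul_sub, transpose_vecMulVec, mul_vecMulVec, mul_vecMulVec, hx, ← hn, z', sub_zero]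
  have e4 : Φ * (a • (1 : Matrix ι ι R) - vecMulVec x α) = a • Φ := by
    rw [Matrix.mul_sub, mul_vecMulVec, hx, z]; simp
  have e2 : Φ * -(-(a • (1 : Matrix ι ι R) - vecMulVec x α) * N * (a • (1 : Matrix ι ι R) - vecMulVec α x))
     = (a • Φ) * N * (a • (1 : Matrix ι ι R) - vecMulVec α x) := by
    rw [← e4]; simp only [Matrix.neg_mul, neg_neg, Matrix.mul_assoc]
  rw [e1, hMt, ← hM, Matrix.mul_add, Matrix.mul_smul, e3, e2]
  rw [Matrix.mul_sub, mul_vecMulVec]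
  simp only [smul_mul, Matrix.mul_smul, Matrix.mul_one, smul_mulVec, smul_vecMulVec,
    ← mulVec_mulVec, smul_smul, pow_two]
  abel

lemma V7a (hΦ : Alt Φ)
    (hx : Φ *ᵥ x = 0)
    (hker : ∀ v : ι → R, x ⬝ᵥ v = 0 → ∃ w, v = Φ *ᵥ w)
    (hker2 : ∀ v : ι → R, Φ *ᵥ v = 0 → ∃ r : R, v = r • x)
    {a b c : R} (hr : Reg3 a b c) {α β : ι → R} (hα : α ⬝ᵥ x = a) (hβ : β ⬝ᵥ x = b)
    (Y : Matrix ι ι R) (hY : Alt (Y * Φ)) :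
    ∃ (r : R) (A : Matrix ι ι R), Alt A ∧ Y = r • 1 + Φ * A := by
  obtain ⟨r, hrr⟩ := hker2 (x ᵥ* Y) (by
    have h1 : Φ *ᵥ (x ᵥ* Y) = -((x ᵥ* Y) ᵥ* Φ) := by
      rw [← vecMul_transpose, hΦ.1, vecMul_neg]
    have h2 : (x ᵥ* Y) ᵥ* Φ = -((Y * Φ) *ᵥ x) := by
      rw [vecMul_vecMul, ← neg_mulVec, ← hY.1, mulVec_transpose]
    rw [h1, h2, ← mulVec_mulVec, hx]; simp)
  have h0 : x ᵥ* (Y - r • 1) = 0 := by simp [vecMul_sub, vecMul_smul, hrr]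
  have hY' : Alt ((Y - r • 1) * Φ) := by
    rw [Matrix.sub_mul]; refine hY.sub ?_
    simpa using hΦ.smul r
  obtain ⟨A, hA, eA⟩ := V7a_aux hΦ hx hker hker2 hα _ h0 hY'
  obtain ⟨B, hB, eB⟩ := V7a_aux hΦ hx hker hker2 hβ _ h0 hY'
  have hab : (b ^ 2) • A - (a ^ 2) • B = 0 :=
    V7b' hker2 hα hr.r1 ((hA.smul _).sub (hB.smul _)) (by
      rw [Matrix.mul_sub, Matrix.mul_smul, Matrix.mul_smul, ← eA, ← eB, smul_smul, smul_smul,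
        mul_comm, sub_self])
  have key : ∀ v w : R, b ^ 2 * v = a ^ 2 * w → ∃ y, v = a ^ 2 * y := by
    intro v w h
    obtain ⟨v1, h1⟩ := hr.r2 (b * v) (a * w) (by linear_combination h)
    obtain ⟨v2, h2⟩ := hr.r2 _ _ h1
    have h3 : b ^ 2 * v2 = a * w := by
      have := hr.r1 (b ^ 2 * v2 - a * w) (by rw [h2] at h; linear_combination h)
      linear_combination this
    obtain ⟨v3, h4⟩ := hr.r2 (b * v2) w (by linear_combination h3)
    obtain ⟨v4, h5⟩ := hr.r2 _ _ h4
    exact ⟨v4, by rw [h2, h5]; ring⟩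
  have : ∀ i j, ∃ y, A i j = a ^ 2 * y := fun i j => key _ (B i j) (by
    have := congrFun (congrFun hab i) j
    simp at this
    linear_combination this)
  choose C hC using this
  have hC' : A = (a ^ 2) • Matrix.of C := by ext i j; simp [hC]
  have ha2 : ∀ v, a ^ 2 * v = 0 → v = 0 := fun v h => hr.r1 _ (hr.r1 _ (by linear_combination h))
  have hCalt : Alt (Matrix.of C) := by
    refine ⟨?_, fun i => ha2 _ ?_⟩
    · ext i j
      have := congrFun (congrFun hA.1 i) j
      simp [hC'] at this
      have h2 := ha2 (C j i + C i j) (by linear_combination this)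
      simp
      linear_combination h2
    · have := hA.2 i
      simpa [hC'] using this
  refine ⟨r, Matrix.of C, hCalt, ?_⟩
  have : Y - r • 1 = Φ * Matrix.of C := by
    ext i j
    have := congrFun (congrFun eA i) j
    rw [hC', Matrix.mul_smul] at this
    simp only [Matrix.smul_apply, smul_eq_mul] at this
    have h2 := ha2 ((Y - r • 1) i j - (Φ * Matrix.of C) i j) (by linear_combination this)
    linear_combination h2
  rw [← this]; abel

lemma V7b (hΦ : Alt Φ)
    (hx : Φ *ᵥ x = 0)
    (hker2 : ∀ v : ι → R, Φ *ᵥ v = 0 → ∃ r : R, v = r • x)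
    {a b c : R} (hr : Reg3 a b c) {α : ι → R} (hα : α ⬝ᵥ x = a)
    {r : R} {A : Matrix ι ι R} (hA : Alt A) (h : r • 1 + Φ * A = 0) : r = 0 ∧ A = 0 := by
  have : r = 0 := by
    have h1 : x ᵥ* (r • 1 + Φ * A) = r • x := by
      rw [vecMul_add, vecMul_smul, ← vecMul_vecMul, vecMul_x hΦ hx]; simp
    rw [h] at h1
    simp at h1
    apply hr.r1
    rw [← hα, mul_comm, ← smul_eq_mul, ← dotProduct_smul, ← h1]; simp
  subst this
  exact ⟨rfl, V7b' hker2 hα hr.r1 hA (by simpa using h)⟩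

lemma alt_r3 [LinearOrder ι] {a b c : R} (hr : Reg3 a b c) {A B C : Matrix ι ι R}
    (hA : Alt A) (h : c • A = a • B + b • C) :
    ∃ P Q, Alt P ∧ Alt Q ∧ A = a • P + b • Q := by
  have : ∀ i j, ∃ y y', A i j = a * y + b * y' := fun i j => hr.r3 _ (B i j) (C i j) (by
    simpa using congrFun (congrFun h i) j)
  choose p q hpq using this
  let f : (ι → ι → R) → Matrix ι ι R := fun p => Matrix.of fun i j =>
    if i < j then p i j else if j < i then - p j i else 0
  have hf : ∀ p, Alt (f p) := fun p => by
    refine ⟨?_, fun i => by simp [f]⟩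
    ext i j
    rcases lt_trichotomy i j with hij | hij | hij
    · simp [f, hij, hij.not_gt]
    · simp [f, hij]
    · simp [f, hij, hij.not_gt]
  refine ⟨f p, f q, hf p, hf q, ?_⟩
  ext i j
  rcases lt_trichotomy i j with hij | hij | hij
  · simp [f, hij, hpq]
  · simp [f, hij, hA.2]
  · have : A i j = - A j i := by simpa using congrFun (congrFun hA.1 j) i
    simp [f, hij, hij.not_gt, this, hpq]; ring

lemma V7c_aux (hΦ : Alt Φ)
    (hx : Φ *ᵥ x = 0)
    (hker : ∀ v : ι → R, x ⬝ᵥ v = 0 → ∃ w, v = Φ *ᵥ w)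
    {a : R} {α : ι → R} (hα : α ⬝ᵥ x = a) (T : Matrix ι ι R)
    (hT : x ⬝ᵥ (T *ᵥ x) = 0) : ∃ Y, Alt (a • T - Y * Φ) := by
  obtain ⟨M, hM⟩ := exists_mul_of_vecMul (Φ := Φ) hker (a • (1 : Matrix ι ι R) - vecMulVec α x) (by
    simp [vecMul_sub, vecMul_smul, vecMul_vecMulVec, dotProduct_comm x α, hα])
  obtain ⟨n, hn⟩ := hker (x ᵥ* T) (by rw [dotProduct_comm, ← dotProduct_mulVec, hT])
  have hn' : x ᵥ* T = -(n ᵥ* Φ) := by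
    rw [hn, ← vecMul_transpose, hΦ.1, vecMul_neg]
  have e : a • T = Φ * (M * T) + vecMulVec α (x ᵥ* T) := by
    rw [← Matrix.mul_assoc, ← hM, ← vecMulVec_mul]
    rw [Matrix.sub_mul]; simp
  refine ⟨-(M * T)ᵀ - vecMulVec α n, ?_⟩
  have e2 : a • T - (-(M * T)ᵀ - vecMulVec α n) * Φ = Φ * (M * T) - (Φ * (M * T))ᵀ := by
    rw [e, hn', transpose_mul Φ, hΦ.1, Matrix.sub_mul, vecMulVec_mul, vecMulVec_neg]
    simp
    abel
  rw [e2]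
  exact alt_sub_transpose _

lemma alt_of_smul {a : R} (ha : ∀ v : R, a * v = 0 → v = 0) {A : Matrix ι ι R}
    (h : Alt (a • A)) : Alt A := by
  refine ⟨?_, fun i => ha _ (by simpa using h.2 i)⟩
  ext i j
  have := congrFun (congrFun h.1 i) j
  simp at this
  have h2 := ha (A j i + A i j) (by linear_combination this)
  simp
  linear_combination h2

lemma V7c (hΦ : Alt Φ)
    (hx : Φ *ᵥ x = 0)
    (hker : ∀ v : ι → R, x ⬝ᵥ v = 0 → ∃ w, v = Φ *ᵥ w)
    (hker2 : ∀ v : ι → R, Φ *ᵥ v = 0 → ∃ r : R, v = r • x)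
    [LinearOrder ι] {a b c : R} (hr : Reg3 a b c) {α β γ : ι → R} (hα : α ⬝ᵥ x = a)
    (hβ : β ⬝ᵥ x = b) (hγ : γ ⬝ᵥ x = c)
    (T : Matrix ι ι R) (hT : x ⬝ᵥ (T *ᵥ x) = 0) : ∃ Y, Alt (T - Y * Φ) := by
  obtain ⟨Ya, ha⟩ := V7c_aux hΦ hx hker hα T hT
  obtain ⟨Yb, hb⟩ := V7c_aux hΦ hx hker hβ T hT
  obtain ⟨Yc, hc⟩ := V7c_aux hΦ hx hker hγ T hT
  have gen : ∀ {a b : R} {Ya Yb : Matrix ι ι R}, Alt (a • T - Ya * Φ) → Alt (b • T - Yb * Φ) →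
      Alt ((b • Ya - a • Yb) * Φ) := by
    intro a b Ya Yb ha hb
    have := (hb.smul a).sub (ha.smul b)
    convert this using 1
    rw [Matrix.sub_mul, smul_sub, smul_sub, smul_smul, smul_smul, smul_mul, smul_mul, mul_comm a b]
    abel
  obtain ⟨r, A, hA, e⟩ := V7a hΦ hx hker hker2 hr hα hβ _ (gen ha hb)
  obtain ⟨r', A', hA', e'⟩ := V7a hΦ hx hker hker2 hr hα hβ _ (gen ha hc)
  obtain ⟨r'', A'', hA'', e''⟩ := V7a hΦ hx hker hker2 hr hα hβ _ (gen hb hc)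
  obtain ⟨h1, h2⟩ := V7b hΦ hx hker2 hr hα (r := c * r - b * r' + a * r'')
    (A := c • A - b • A' + a • A'') (((hA.smul _).sub (hA'.smul _)).add (hA''.smul _)) (by
      have : (c * r - b * r' + a * r'') • (1 : Matrix ι ι R) + Φ * (c • A - b • A' + a • A'')
        = c • (r • 1 + Φ * A) - b • (r' • 1 + Φ * A') + a • (r'' • 1 + Φ * A'') := by
        rw [Matrix.mul_add, Matrix.mul_sub, Matrix.mul_smul, Matrix.mul_smul, Matrix.mul_smul]
        module
      rw [this, ← e, ← e', ← e'']
      module)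
  obtain ⟨P, Q, hP, hQ, ePQ⟩ := alt_r3 hr hA (B := -A'') (C := A') (by
    have : c • A = (c • A - b • A' + a • A'') + a • -A'' + b • A' := by module
    rw [this, h2]; simp)
  obtain ⟨p, q, epq⟩ := hr.r3 r (-r'') r' (by linear_combination h1)
  have key : b • (Ya - (q • 1 + Φ * Q)) = a • (Yb + (p • 1 + Φ * P)) := by
    have : b • Ya = a • Yb + (r • 1 + Φ * A) := by rw [← e]; abel
    rw [smul_sub, this, ePQ, epq, Matrix.mul_add, Matrix.mul_smul, Matrix.mul_smul]
    module
  have : ∀ i j, ∃ y, (Ya - (q • 1 + Φ * Q)) i j = a * y := fun i j =>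
    hr.r2 _ ((Yb + (p • 1 + Φ * P)) i j) (by
      simpa only [Matrix.smul_apply, smul_eq_mul] using congrFun (congrFun key i) j)
  choose Y hY using this
  have hY' : Ya - (q • 1 + Φ * Q) = a • Matrix.of Y := by
    ext i j
    rw [hY]; simp
  refine ⟨Matrix.of Y, alt_of_smul hr.r1 ?_⟩
  have e5 : a • (T - Matrix.of Y * Φ) = (a • T - Ya * Φ) + (q • Φ + Φ * Q * Φ) := by
    rw [smul_sub, ← smul_mul, ← hY', Matrix.sub_mul, Matrix.add_mul, smul_mul, Matrix.one_mul]
    abel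
  rw [e5]
  refine ha.add ((hΦ.smul q).add ?_)
  have := (hQ.conj Φ).neg
  rw [hΦ.1] at this
  simpa using this

open TensorProduct in
theorem isSyz_of_matrix (hΦ : Alt Φ)
    (hx : Φ *ᵥ x = 0)
    (hker : ∀ v : ι → R, x ⬝ᵥ v = 0 → ∃ w, v = Φ *ᵥ w)
    (hker2 : ∀ v : ι → R, Φ *ᵥ v = 0 → ∃ r : R, v = r • x)
    [LinearOrder ι] {I : Ideal R} (hI : I = Ideal.span (Set.range x))
    {a b c : R} (hr : Reg3 a b c) (haI : a ∈ I) (hbI : b ∈ I) (hcI : c ∈ I) :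
    LinearMap.range (Submodule.mulMap I I) = I * I ∧
    LinearMap.ker (Submodule.mulMap I I) =
      Submodule.span R {w : I ⊗[R] I | ∃ a b : I, w = b ⊗ₜ a - a ⊗ₜ b} := by
  refine ⟨Submodule.mulMap_range I I, le_antisymm ?_ ?_⟩
  swap
  · rw [Submodule.span_le]
    rintro _ ⟨u, v, rfl⟩
    simp [mul_comm]
  have hxI : ∀ i, x i ∈ I := fun i => hI ▸ Ideal.subset_span ⟨i, rfl⟩
  have hmem : ∀ a ∈ I, ∃ α : ι → R, α ⬝ᵥ x = a := fun a ha => by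
    rw [hI, Ideal.mem_span_range_iff_exists_fun] at ha
    exact ha
  obtain ⟨α, hα⟩ := hmem a haI
  obtain ⟨β, hβ⟩ := hmem b hbI
  obtain ⟨γ, hγ⟩ := hmem c hcI
  let X : ι → I := fun i => ⟨x i, hxI i⟩
  intro w hw
  have hrep : ∀ w : I ⊗[R] I, ∃ T : Matrix ι ι R, w = ∑ i, ∑ j, T i j • (X i ⊗ₜ[R] X j) := by
    intro w
    induction w with
    | zero => exact ⟨0, by simp⟩
    | add u v hu hv =>
      obtain ⟨T, rfl⟩ := hu
      obtain ⟨T', rfl⟩ := hv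
      exact ⟨T + T', by simp [add_smul, Finset.sum_add_distrib]⟩
    | tmul u v =>
      obtain ⟨p, hp⟩ := hmem u u.2
      obtain ⟨q, hq⟩ := hmem v v.2
      have hu : u = ∑ i, p i • X i := by
        apply Subtype.ext; rw [← hp]; simp [dotProduct, X]
      have hv : v = ∑ i, q i • X i := by
        apply Subtype.ext; rw [← hq]; simp [dotProduct, X]
      refine ⟨vecMulVec p q, ?_⟩
      rw [hu, hv, TensorProduct.sum_tmul]
      refine Finset.sum_congr rfl fun i _ => ?_
      rw [TensorProduct.tmul_sum]
      refine Finset.sum_congr rfl fun j _ => ?_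
      rw [TensorProduct.smul_tmul_smul, vecMulVec_apply]
  obtain ⟨T, rfl⟩ := hrep w
  have hT : x ⬝ᵥ (T *ᵥ x) = 0 := by
    rw [LinearMap.mem_ker] at hw
    simp only [map_sum, map_smul, Submodule.mulMap_tmul, smul_eq_mul, X] at hw
    rw [← hw]
    simp only [dotProduct, mulVec, Finset.mul_sum]
    refine Finset.sum_congr rfl fun i _ => Finset.sum_congr rfl fun j _ => by ring
  obtain ⟨Y, hY⟩ := V7c hΦ hx hker hker2 hr hα hβ hγ T hT
  set A := T - Y * Φ with hAdef
  have hTA : T = A + Y * Φ := by rw [hAdef]; abel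
  have hrel : ∀ i, ∑ j, (Y * Φ) i j • (X i ⊗ₜ[R] X j) = 0 := fun i => by
    simp only [← TensorProduct.tmul_smul]
    rw [← TensorProduct.tmul_sum]
    have : ∑ j, (Y * Φ) i j • X j = 0 := by
      apply Subtype.ext
      have h : (Y * Φ) *ᵥ x = 0 := by rw [← mulVec_mulVec, hx, mulVec_zero]
      have h2 := congrFun h i
      simpa [X, mulVec, dotProduct] using h2
    rw [this, TensorProduct.tmul_zero]
  have hsum : ∑ i, ∑ j, T i j • (X i ⊗ₜ[R] X j) = ∑ i, ∑ j, A i j • (X i ⊗ₜ[R] X j) := by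
    rw [hTA]
    simp only [Matrix.add_apply, add_smul, Finset.sum_add_distrib, hrel]
    simp
  rw [hsum]
  have hAij : ∀ i j, A j i = - A i j := fun i j => by simpa using congrFun (congrFun hY.1 i) j
  have key : ∑ i, ∑ j, A i j • (X i ⊗ₜ[R] X j) =
      ∑ i, ∑ j, if i < j then A i j • (X i ⊗ₜ[R] X j - X j ⊗ₜ[R] X i) else 0 := by
    have e1 : ∀ i j, A i j • (X i ⊗ₜ[R] X j) =
      (if i < j then A i j • (X i ⊗ₜ[R] X j) else 0) + (if j < i then A i j • (X i ⊗ₜ[R] X j) else 0) := by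
      intro i j
      rcases lt_trichotomy i j with hij | hij | hij
      · simp [hij, hij.not_gt]
      · subst hij; simp [hY.2]
      · simp [hij, hij.not_gt]
    have e2 : ∑ i, ∑ j, (if j < i then A i j • (X i ⊗ₜ[R] X j) else 0) =
        ∑ i, ∑ j, if i < j then - (A i j • (X j ⊗ₜ[R] X i)) else 0 := by
      rw [Finset.sum_comm]
      refine Finset.sum_congr rfl fun i _ => Finset.sum_congr rfl fun j _ => ?_
      split_ifs
      · have : A j i • (X j ⊗ₜ[R] X i) = (-A i j : R) • (X j ⊗ₜ[R] X i) :=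
          congrArg (fun t : R => t • (X j ⊗ₜ[R] X i)) (hAij i j)
        rw [this]
        exact neg_smul (A i j : R) (X j ⊗ₜ[R] X i)
      · rfl
    rw [Finset.sum_congr rfl fun i _ => Finset.sum_congr rfl fun j _ => e1 i j]
    simp only [Finset.sum_add_distrib]
    rw [e2]
    simp only [← Finset.sum_add_distrib]
    refine Finset.sum_congr rfl fun i _ => Finset.sum_congr rfl fun j _ => ?_
    split_ifs
    · rw [smul_sub]; abel
    · simp
  rw [key]
  refine Submodule.sum_mem _ fun i _ => Submodule.sum_mem _ fun j _ => ?_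
  split_ifs
  · exact Submodule.smul_mem _ _ (Submodule.subset_span ⟨X j, X i, rfl⟩)
  · exact Submodule.zero_mem _

end V7
end Syz
end fileV7

section fileVE
set_option linter.unusedSectionVars false
open Matrix

namespace Syz

section VE

variable {R : Type*} [CommRing R]

lemma lift_free {P M N : Type*} [AddCommGroup P] [Module R P] [Module.Free R P]
    [AddCommGroup M] [Module R M] [AddCommGroup N] [Module R N]
    (f : P →ₗ[R] N) (g : M →ₗ[R] N) (h : ∀ p, ∃ m, g m = f p) :
    ∃ k : P →ₗ[R] M, ∀ p, g (k p) = f p := by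
  let b := Module.Free.chooseBasis R P
  choose m hm using fun i => h (b i)
  refine ⟨b.constr R m, fun p => ?_⟩
  have : g ∘ₗ b.constr R m = f := b.ext fun i => by simp [hm]
  exact LinearMap.congr_fun this p

/-- the data of the resolution `0 → R → G → F → R` with image `I` at the end. -/
structure Res {R : Type*} [CommRing R] (I : Ideal R) {F G : Type*} [AddCommGroup F] [Module R F]
    [AddCommGroup G] [Module R G] (d : F →ₗ[R] R) (φ : G →ₗ[R] F) (ψ : G) : Prop where
  hd : LinearMap.range d = I
  dφ : ∀ g, d (φ g) = 0
  ex1 : ∀ f, d f = 0 → ∃ g, φ g = f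
  φψ : φ ψ = 0
  ex2 : ∀ g, φ g = 0 → ∃ r : R, g = r • ψ
  inj : ∀ r : R, r • ψ = 0 → r = 0

variable {I : Ideal R} {F G : Type*} [AddCommGroup F] [Module R F] [Module.Free R F]
  [Module.Finite R F] [AddCommGroup G] [Module R G] [Module.Free R G] [Module.Finite R G]
  {d : F →ₗ[R] R} {φ : G →ₗ[R] F} {ψ : G}

lemma Res.E1 (H : Res I d φ ψ) {a b c : R} (hr : Reg3 a b c) (ha : a ∈ I) (hb : b ∈ I)
    (l : F →ₗ[R] R) (hl : ∀ g, l (φ g) = 0) : ∃ r : R, l = r • d := by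
  rw [← H.hd] at ha hb
  obtain ⟨fa, rfl⟩ := ha
  obtain ⟨fb, rfl⟩ := hb
  have key : ∀ f, d f * l fa = d fa * l f := fun f => by
    obtain ⟨g, hg⟩ := H.ex1 (d f • fa - d fa • f) (by simp [mul_comm])
    have := hl g
    rw [hg] at this
    simp at this
    linear_combination this
  obtain ⟨r, hr'⟩ := hr.r2 _ _ (key fb)
  refine ⟨r, LinearMap.ext fun f => ?_⟩
  have h1 := hr.r1 (l f - r * d f) (by rw [mul_sub, ← key f, hr']; ring)
  simp
  linear_combination h1

lemma Res.E2_aux (H : Res I d φ ψ) {a : R} (ha : a ∈ I) (γ : G →ₗ[R] R) (hγ : γ ψ = 0) :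
    ∃ l : F →ₗ[R] R, ∀ g, l (φ g) = a * γ g := by
  rw [← H.hd] at ha
  obtain ⟨fa, rfl⟩ := ha
  obtain ⟨h, hh⟩ := lift_free (d fa • LinearMap.id - d.smulRight fa : F →ₗ[R] F) φ (fun f =>
    H.ex1 _ (by simp [mul_comm]))
  refine ⟨γ ∘ₗ h, fun g => ?_⟩
  obtain ⟨r, hr⟩ := H.ex2 (h (φ g) - d fa • g) (by rw [map_sub, hh]; simp [H.dφ])
  have := congrArg γ hr
  simp [hγ] at this
  simp
  linear_combination this

lemma Res.E2 (H : Res I d φ ψ) {a b c : R} (hr : Reg3 a b c) (ha : a ∈ I) (hb : b ∈ I) (hc : c ∈ I)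
    (γ : G →ₗ[R] R) (hγ : γ ψ = 0) :
    ∃ l : F →ₗ[R] R, ∀ g, l (φ g) = γ g := by
  obtain ⟨la, hla⟩ := H.E2_aux ha γ hγ
  obtain ⟨lb, hlb⟩ := H.E2_aux hb γ hγ
  obtain ⟨lc, hlc⟩ := H.E2_aux hc γ hγ
  obtain ⟨r, e⟩ := H.E1 hr ha hb (b • la - a • lb) (fun g => by simp [hla, hlb]; ring)
  obtain ⟨r', e'⟩ := H.E1 hr ha hb (c • la - a • lc) (fun g => by simp [hla, hlc]; ring)
  obtain ⟨r'', e''⟩ := H.E1 hr ha hb (c • lb - b • lc) (fun g => by simp [hlb, hlc]; ring)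
  have h0 : c * r - b * r' + a * r'' = 0 := by
    rw [← H.hd] at ha
    obtain ⟨fa, hfa⟩ := ha
    apply hr.r1
    have e := LinearMap.congr_fun e fa
    have e' := LinearMap.congr_fun e' fa
    have e'' := LinearMap.congr_fun e'' fa
    simp [hfa] at e e' e''
    linear_combination -c * e + b * e' - a * e''
  obtain ⟨y, y', hy⟩ := hr.r3 r (-r'') r' (by linear_combination h0)
  have key : ∀ f, ∃ z, (la - y' • d) f = a * z := fun f => hr.r2 _ (lb f + y * d f) (by
    have e := LinearMap.congr_fun e f
    simp at e ⊢
    rw [hy] at e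
    linear_combination e)
  obtain ⟨l, hl⟩ := lift_free (la - y' • d) (a • LinearMap.id) (fun f => by
    obtain ⟨z, hz⟩ := key f
    exact ⟨z, by simp [hz]⟩)
  refine ⟨l, fun g => ?_⟩
  have := hl (φ g)
  simp [hla, H.dφ] at this
  have := hr.r1 (l (φ g) - γ g) (by linear_combination this)
  linear_combination this

lemma Res.E3 (H : Res I d φ ψ) {a b c : R} (hr : Reg3 a b c) (ha : a ∈ I) (hb : b ∈ I) (hc : c ∈ I)
    (γ : G →ₗ[R] R) : γ ψ ∈ I := by
  let D := Module.Dual R G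
  let D' := Module.Dual R F
  obtain ⟨h2, hh2⟩ := lift_free (P := Module.Dual R G) (M := Module.Dual R F)
    (γ ψ • (LinearMap.id : Module.Dual R G →ₗ[R] Module.Dual R G) - (Module.Dual.eval R G ψ).smulRight γ)
    (φ.dualMap) (fun β => by
      obtain ⟨l, hl⟩ := H.E2 hr ha hb hc (γ ψ • β - β ψ • γ) (by simp; ring)
      exact ⟨l, LinearMap.ext fun g => by simpa using hl g⟩)
  obtain ⟨h1, hh1⟩ := lift_free (P := Module.Dual R F) (M := R) (N := Module.Dual R F)
    (γ ψ • LinearMap.id - h2 ∘ₗ φ.dualMap) (LinearMap.toSpanSingleton R _ d) (fun l => by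
      obtain ⟨r, hr⟩ := H.E1 hr ha hb (γ ψ • l - h2 (φ.dualMap l)) (fun g => by
        have := LinearMap.congr_fun (hh2 (φ.dualMap l)) g
        simp [H.φψ] at this
        simp [this])
      refine ⟨r, ?_⟩
      simp [hr])
  have h3 : φ.dualMap d = 0 := LinearMap.ext fun g => by simp [H.dφ]
  have h4 := hh1 d
  simp [h3] at h4
  have h5 : γ ψ = h1 d := by
    rw [← H.hd] at ha
    obtain ⟨fa, hfa⟩ := ha
    have := LinearMap.congr_fun h4 fa
    simp [hfa] at this
    have := hr.r1 (γ ψ - h1 d) (by linear_combination -this)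
    linear_combination this
  rw [h5]
  let e := Module.Free.chooseBasis R F
  have h6 : d = ∑ i, d (e i) • e.coord i := e.ext fun j => by
    simp [Finsupp.single_apply]
  rw [h6, map_sum]
  refine Ideal.sum_mem _ fun i _ => ?_
  rw [map_smul, smul_eq_mul]
  apply Ideal.mul_mem_right
  rw [← H.hd]
  exact ⟨_, rfl⟩

lemma Res.exists_mu [Nontrivial R] (H : Res I d φ ψ) :
    ∃ μ : F →ₗ[R] F →ₗ[R] G, (∀ f, μ f f = 0) ∧ ∀ f f', φ (μ f f') = d f • f' - d f' • f := by
  classical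
  let e := Module.finBasis R F
  choose m hm using fun i j => H.ex1 (d (e i) • e j - d (e j) • e i) (by simp [mul_comm])
  let μ : F →ₗ[R] F →ₗ[R] G := LinearMap.mk₂ R (fun f f' => ∑ i, ∑ j,
    if i < j then (e.repr f i * e.repr f' j - e.repr f j * e.repr f' i) • m i j else 0)
    (fun f f' g => by
      simp only [← Finset.sum_add_distrib]
      refine Finset.sum_congr rfl fun i _ => Finset.sum_congr rfl fun j _ => ?_
      split_ifs
      · simp only [map_add, Finsupp.add_apply]; module
      · simp)
    (fun r f g => by
      simp only [Finset.smul_sum]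
      refine Finset.sum_congr rfl fun i _ => Finset.sum_congr rfl fun j _ => ?_
      split_ifs
      · simp only [map_smul, Finsupp.smul_apply, smul_eq_mul]; module
      · simp)
    (fun f f' g => by
      simp only [← Finset.sum_add_distrib]
      refine Finset.sum_congr rfl fun i _ => Finset.sum_congr rfl fun j _ => ?_
      split_ifs
      · simp only [map_add, Finsupp.add_apply]; module
      · simp)
    (fun r f g => by
      simp only [Finset.smul_sum]
      refine Finset.sum_congr rfl fun i _ => Finset.sum_congr rfl fun j _ => ?_
      split_ifs
      · simp only [map_smul, Finsupp.smul_apply, smul_eq_mul]; module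
      · simp)
  have hμ : ∀ f, μ f f = 0 := fun f => by
    simp only [μ, LinearMap.mk₂_apply]
    refine Finset.sum_eq_zero fun i _ => Finset.sum_eq_zero fun j _ => ?_
    rw [mul_comm, sub_self]; simp
  have hanti : ∀ f f', μ f f' = - μ f' f := fun f f' => by
    have := hμ (f + f')
    simp only [map_add, LinearMap.add_apply, hμ] at this
    rw [eq_neg_iff_add_eq_zero, ← this]
    abel
  have hlt : ∀ i j, i < j → μ (e i) (e j) = m i j := fun i j hij => by
    simp only [μ, LinearMap.mk₂_apply, Module.Basis.repr_self]
    rw [Finset.sum_eq_single i, Finset.sum_eq_single j]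
    · simp [hij, hij.ne, hij.ne']
    · intro k _ hk
      have : ∀ h : i < k, i ≠ k := fun h => h.ne
      split_ifs with h
      · simp [hk, Finsupp.single_apply, hk.symm, hij.ne, hij.ne', h.ne, h.ne']
      · rfl
    · simp
    · intro k _ hk
      refine Finset.sum_eq_zero fun l _ => ?_
      split_ifs with h
      · have : ¬ (l = i ∧ k = j) := by rintro ⟨rfl, rfl⟩; exact absurd h hij.not_gt
        rw [not_and_or] at this
        rcases this with h' | h' <;> simp [Finsupp.single_apply, hk.symm, Ne.symm h', eq_comm] <;> tauto
      · rfl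
    · simp
  refine ⟨μ, hμ, ?_⟩
  let ν : F →ₗ[R] F →ₗ[R] F := LinearMap.mk₂ R (fun f f' => d f • f' - d f' • f)
    (fun _ _ _ => by simp only [map_add]; module)
    (fun _ _ _ => by simp only [map_smul, smul_eq_mul]; module)
    (fun _ _ _ => by simp only [map_add]; module)
    (fun _ _ _ => by simp only [map_smul, smul_eq_mul]; module)
  have : μ.compr₂ φ = ν := e.ext fun i => e.ext fun j => by
    simp only [LinearMap.compr₂_apply, ν, LinearMap.mk₂_apply]
    rcases lt_trichotomy i j with hij | hij | hij
    · rw [hlt _ _ hij, hm]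
    · subst hij; simp [hμ]
    · rw [hanti, map_neg, hlt _ _ hij, hm]; abel
  intro f f'
  exact LinearMap.congr_fun₂ this f f'

lemma Res.exists_p [Nontrivial R] (H : Res I d φ ψ) :
    ∃ p : F →ₗ[R] G →ₗ[R] R, (∀ f, p f ψ = d f) ∧ ∀ g, p (φ g) g = 0 := by
  obtain ⟨μ, hμ, hφμ⟩ := H.exists_mu
  have : ∀ f g, ∃ r : R, d f • g - μ f (φ g) = r • ψ := fun f g => H.ex2 _ (by
    rw [map_sub, hφμ]; simp [H.dφ])
  choose p hp using this
  have hinj : ∀ r s : R, r • ψ = s • ψ → r = s := fun r s h =>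
    sub_eq_zero.1 (H.inj _ (by rw [sub_smul, h, sub_self]))
  refine ⟨LinearMap.mk₂ R p ?_ ?_ ?_ ?_, fun f => ?_, fun g => ?_⟩
  · intro f f' g
    apply hinj
    rw [add_smul, ← hp, ← hp, ← hp]
    simp only [map_add, LinearMap.add_apply]; module
  · intro r f g
    apply hinj
    rw [smul_assoc, ← hp, ← hp]
    simp only [map_smul, LinearMap.smul_apply, smul_eq_mul]; module
  · intro f g g'
    apply hinj
    rw [add_smul, ← hp, ← hp, ← hp]
    simp only [map_add]; module
  · intro r f g
    apply hinj
    rw [smul_assoc, ← hp, ← hp]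
    simp only [map_smul]; module
  · apply hinj
    simp only [LinearMap.mk₂_apply]
    rw [← hp, H.φψ]; simp
  · apply hinj
    simp only [LinearMap.mk₂_apply]
    rw [← hp, H.dφ, hμ]; simp

open TensorProduct in
theorem Res.isSyz [IsLocalRing R] (H : Res I d φ ψ) {a b c : R} (hr : Reg3 a b c)
    (ha : a ∈ I) (hb : b ∈ I) (hc : c ∈ I)
    (hmin : ∀ g, φ g ∈ (IsLocalRing.maximalIdeal R • ⊤ : Submodule R F)) :
    LinearMap.range (Submodule.mulMap I I) = I * I ∧
    LinearMap.ker (Submodule.mulMap I I) =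
      Submodule.span R {w : I ⊗[R] I | ∃ a b : I, w = b ⊗ₜ a - a ⊗ₜ b} := by
  classical
  obtain ⟨p, hpψ, hpφ⟩ := H.exists_p
  -- surjectivity of p
  have hsurj : ∀ γ : Module.Dual R G, ∃ f, p f = γ := by
    have : LinearMap.range p = ⊤ := by
      rw [eq_top_iff]
      apply Submodule.le_of_le_smul_of_le_jacobson_bot (I := IsLocalRing.maximalIdeal R)
        (Module.Finite.fg_top) (IsLocalRing.maximalIdeal_le_jacobson _)
      intro γ _
      have h1 := H.E3 hr ha hb hc γ
      rw [← H.hd] at h1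
      obtain ⟨f, hf⟩ := h1
      obtain ⟨l, hl⟩ := H.E2 hr ha hb hc (γ - p f) (by simp [hpψ, hf])
      have : γ = p f + (γ - p f) := by abel
      rw [this]
      refine Submodule.add_mem_sup ⟨f, rfl⟩ ?_
      let e := Module.Free.chooseBasis R G
      have h6 : γ - p f = ∑ i, (γ - p f) (e i) • e.coord i := e.ext fun j => by
        simp [Finsupp.single_apply]
      rw [h6]
      refine Submodule.sum_mem _ fun i _ => Submodule.smul_mem_smul ?_ trivial
      rw [← hl]
      have := Submodule.mem_map_of_mem (f := l) (hmin (e i))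
      rw [Submodule.map_smul''] at this
      exact Ideal.mul_le_left this
    intro γ
    have : γ ∈ LinearMap.range p := this ▸ trivial
    exact this
  have hanti : ∀ g g', p (φ g) g' = - p (φ g') g := fun g g' => by
    have := hpφ (g + g')
    simp only [map_add, LinearMap.add_apply, hpφ] at this
    linear_combination this
  have hsurj' : ∀ l : Module.Dual R F, ∃ g, p.flip g = l := fun l => by
    obtain ⟨f, hf⟩ := hsurj (l ∘ₗ φ)
    obtain ⟨g, rfl⟩ := H.ex1 f (by rw [← hpψ, hf]; simp [H.φψ])
    obtain ⟨r, hrr⟩ := H.E1 hr ha hb (l + p.flip g) (fun g' => by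
      have := LinearMap.congr_fun hf g'
      simp at this ⊢
      rw [← this, hanti]; simp)
    refine ⟨r • ψ - g, LinearMap.ext fun f => ?_⟩
    have := LinearMap.congr_fun hrr f
    simp [hpψ] at this ⊢
    linear_combination -this
  have hinj' : Function.Injective p.flip := by
    rw [injective_iff_map_eq_zero]
    intro g hg
    rw [← Module.forall_dual_apply_eq_zero_iff R]
    intro γ
    obtain ⟨f, rfl⟩ := hsurj γ
    exact LinearMap.congr_fun hg f
  let e := Module.finBasis R F
  let E : G ≃ₗ[R] Module.Dual R F := LinearEquiv.ofBijective p.flip ⟨hinj', hsurj'⟩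
  let γ := e.dualBasis.map E.symm
  have hγ : ∀ i j, p (e j) (γ i) = if i = j then 1 else 0 := fun i j => by
    have : p.flip (γ i) = e.dualBasis i := by
      change E (γ i) = _
      simp [γ]
    have := LinearMap.congr_fun this (e j)
    simpa [Finsupp.single_apply, eq_comm] using this
  have hpe : ∀ f i, p f (γ i) = e.repr f i := fun f i => by
    conv_lhs => rw [← e.sum_repr f, map_sum, LinearMap.sum_apply]
    simp only [map_smul, LinearMap.smul_apply, hγ]
    simp
  have hpγ : ∀ g i, p (e i) g = γ.repr g i := fun g i => by
    conv_lhs => rw [← γ.sum_repr g, map_sum]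
    simp only [map_smul, hγ]
    simp
  let Φ : Matrix _ _ R := Matrix.of fun i j => p (φ (γ j)) (γ i)
  let x := fun i => d (e i)
  have hψ : ψ = ∑ i, x i • γ i := by
    conv_lhs => rw [← γ.sum_repr ψ]
    simp only [← hpγ, hpψ, x]
  have hΦv : ∀ v i, (Φ *ᵥ v) i = e.repr (φ (∑ j, v j • γ j)) i := fun v i => by
    simp [Φ, mulVec, dotProduct, hpe, mul_comm]
  refine isSyz_of_matrix (Φ := Φ) (x := x) ⟨?_, fun i => hpφ _⟩ ?_ ?_ ?_ ?_ hr ha hb hc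
  · ext i j; simp [Φ]; exact hanti _ _
  · ext i; rw [hΦv, ← hψ, H.φψ]; simp
  · intro v hv
    obtain ⟨g, hg⟩ := H.ex1 (∑ i, v i • e i) (by
      rw [← hv]; simp [x, dotProduct, mul_comm])
    refine ⟨γ.repr g, ?_⟩
    ext i
    rw [hΦv, γ.sum_repr, hg]
    simp [Finsupp.single_apply]
  · intro v hv
    obtain ⟨r, hr⟩ := H.ex2 (∑ j, v j • γ j) (e.repr.injective (by
      ext i; rw [← hΦv, hv]; simp))
    refine ⟨r, ?_⟩
    ext i
    have := congrArg (fun g => γ.repr g i) hr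
    rw [hψ] at this
    simpa [Finsupp.single_apply] using this
  · rw [← H.hd, LinearMap.range_eq_map, ← e.span_eq, Submodule.map_span, ← Set.range_comp]
    rfl

end VE
end Syz
end fileVE

section fileP1
set_option linter.unusedSectionVars false
open CategoryTheory

namespace Syz

lemma bridge {R : Type u} [CommRing R] (M N : ModuleCat.{u} R) (i : ℕ) (hi : 0 < i)
    (h : Subsingleton (((Ext R (ModuleCat.{u} R) i).obj (Opposite.op M)).obj N)) :
    Subsingleton (Abelian.Ext.{u} M N i) := by
  obtain ⟨j, rfl⟩ : ∃ j, i = j + 1 := ⟨i - 1, by omega⟩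
  let P : ProjectiveResolution M := projectiveResolution M
  have h1 : Limits.IsZero (((Ext R (ModuleCat.{u} R) (j + 1)).obj (Opposite.op M)).obj N) :=
    ModuleCat.isZero_of_subsingleton _
  have h2 := h1.of_iso (P.isoExt (R := R) (j + 1) N).symm
  rw [← HomologicalComplex.exactAt_iff_isZero_homology,
    HomologicalComplex.exactAt_iff' _ j (j + 1) (j + 2) (by simp) (by simp),
    ShortComplex.moduleCat_exact_iff] at h2
  refine subsingleton_of_forall_eq 0 fun e => ?_
  obtain ⟨f, hf, rfl⟩ := P.extMk_surjective e (j + 2) rfl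
  rw [P.extMk_eq_zero_iff f _ _ hf j rfl]
  obtain ⟨g, hg⟩ := h2 f (by
    exact hf)
  exact ⟨g, hg⟩

end Syz
end fileP1

section fileP2
set_option linter.unusedSectionVars false
open CategoryTheory Pointwise

namespace Syz

section P2
variable {R : Type u} [CommRing R]

/-- Ext of unbundled modules -/
abbrev EX (R : Type u) [CommRing R] (M N : Type u) [AddCommGroup M] [Module R M]
    [AddCommGroup N] [Module R N] (i : ℕ) : Type u :=
  Abelian.Ext.{u} (ModuleCat.of R M) (ModuleCat.of R N) i

variable {A B C M N : Type u} [AddCommGroup A] [Module R A] [AddCommGroup B] [Module R B]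
  [AddCommGroup C] [Module R C] [AddCommGroup M] [Module R M] [AddCommGroup N] [Module R N]

/-- class of a linear map -/
noncomputable abbrev mk0 (f : M →ₗ[R] N) : EX R M N 0 := Abelian.Ext.mk₀ (ModuleCat.ofHom f)

lemma ses {f : A →ₗ[R] B} {g : B →ₗ[R] C} (hf : Function.Injective f)
    (hfg : Function.Exact f g) (hg : Function.Surjective g) :
    (ShortComplex.mk (ModuleCat.ofHom f) (ModuleCat.ofHom g)
      (by ext x; exact hfg.apply_apply_eq_zero x)).ShortExact where
  exact := by
    rw [ShortComplex.moduleCat_exact_iff]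
    intro x hx
    exact (hfg x).1 hx
  mono_f := (ModuleCat.mono_iff_injective _).2 hf
  epi_g := (ModuleCat.epi_iff_surjective _).2 hg

lemma mk0_smul_id (r : R) {i : ℕ} (e : EX R M N i) :
    (mk0 (r • (LinearMap.id : M →ₗ[R] M))).comp e (zero_add i) = r • e := by
  have : ModuleCat.ofHom (r • (LinearMap.id : M →ₗ[R] M)) = r • 𝟙 (ModuleCat.of R M) := rfl
  rw [mk0, this, Abelian.Ext.mk₀_smul]
  simp

lemma comp_mk0_smul_id (r : R) {i : ℕ} (e : EX R M N i) :
    e.comp (mk0 (r • (LinearMap.id : N →ₗ[R] N))) (add_zero i) = r • e := by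
  have : ModuleCat.ofHom (r • (LinearMap.id : N →ₗ[R] N)) = r • 𝟙 (ModuleCat.of R N) := rfl
  rw [mk0, this, Abelian.Ext.mk₀_smul]
  simp

lemma smul_eq_zero_left {r : R} (h : ∀ m : M, r • m = 0) {i : ℕ} (e : EX R M N i) : r • e = 0 := by
  rw [← mk0_smul_id]
  have : (r • (LinearMap.id : M →ₗ[R] M)) = 0 := LinearMap.ext fun m => h m
  rw [this]
  simp [mk0]

lemma mk0_bijective : Function.Bijective (mk0 : (M →ₗ[R] N) → EX R M N 0) := by
  have h1 : Function.Bijective (ModuleCat.ofHom : (M →ₗ[R] N) → (ModuleCat.of R M ⟶ ModuleCat.of R N)) :=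
    (ModuleCat.homEquiv (M := ModuleCat.of R M) (N := ModuleCat.of R N)).symm.bijective
  have h2 := (Abelian.Ext.homEquiv₀ (X := ModuleCat.of R M) (Y := ModuleCat.of R N)).symm.bijective
  exact h2.comp h1

lemma vcongr_left (e : A ≃ₗ[R] B) {i : ℕ} [Subsingleton (EX R A N i)] :
    Subsingleton (EX R B N i) := by
  refine subsingleton_of_forall_eq 0 fun x => ?_
  have h1 : (mk0 e.symm.toLinearMap).comp ((mk0 e.toLinearMap).comp x (zero_add i)) (zero_add i) = x := by
    rw [← Abelian.Ext.comp_assoc _ _ _ (zero_add 0) (zero_add i) (by simp), mk0, mk0,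
      Abelian.Ext.mk₀_comp_mk₀]
    have : ModuleCat.ofHom e.symm.toLinearMap ≫ ModuleCat.ofHom e.toLinearMap
      = 𝟙 (ModuleCat.of R B) := by ext y; simp
    rw [this]; simp
  rw [← h1, Subsingleton.elim ((mk0 e.toLinearMap).comp x (zero_add i)) 0]
  simp

lemma vzero_left [Subsingleton M] (i : ℕ) : Subsingleton (EX R M N i) := by
  refine subsingleton_of_forall_eq 0 fun x => ?_
  have := smul_eq_zero_left (R := R) (M := M) (r := 1) (fun m => Subsingleton.elim _ _) x
  simpa using this

section SES
variable {f : A →ₗ[R] B} {g : B →ₗ[R] C} (hf : Function.Injective f)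
    (hfg : Function.Exact f g) (hg : Function.Surjective g)

lemma vB (hf : Function.Injective f) (hfg : Function.Exact f g) (hg : Function.Surjective g) {i : ℕ}
    (h1 : Subsingleton (EX R A N i)) (h3 : Subsingleton (EX R C N i)) :
    Subsingleton (EX R B N i) := by
  refine subsingleton_of_forall_eq 0 fun x => ?_
  obtain ⟨y, rfl⟩ := Abelian.Ext.contravariant_sequence_exact₂ (ses hf hfg hg) _ x
    (h1.elim _ _)
  rw [h3.elim y 0]; simp

lemma vA (hf : Function.Injective f) (hfg : Function.Exact f g) (hg : Function.Surjective g) {i : ℕ}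
    (h2 : Subsingleton (EX R B N i)) (h3 : Subsingleton (EX R C N (i + 1))) :
    Subsingleton (EX R A N i) := by
  refine subsingleton_of_forall_eq 0 fun x => ?_
  obtain ⟨y, rfl⟩ := Abelian.Ext.contravariant_sequence_exact₁ (ses hf hfg hg) _ x (add_comm 1 i)
    (h3.elim _ _)
  rw [h2.elim y 0]; simp

lemma vC (hf : Function.Injective f) (hfg : Function.Exact f g) (hg : Function.Surjective g) {i : ℕ}
    (h1 : Subsingleton (EX R A N i)) (h2 : Subsingleton (EX R B N (i + 1))) :
    Subsingleton (EX R C N (i + 1)) := by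
  refine subsingleton_of_forall_eq 0 fun x => ?_
  obtain ⟨y, rfl⟩ := Abelian.Ext.contravariant_sequence_exact₃ (ses hf hfg hg) _ x
    (h2.elim _ _) (add_comm 1 i)
  rw [h1.elim y 0]; simp

lemma cB (hf : Function.Injective f) (hfg : Function.Exact f g) (hg : Function.Surjective g) {i : ℕ}
    (h1 : Subsingleton (EX R M A i)) (h3 : Subsingleton (EX R M C i)) :
    Subsingleton (EX R M B i) := by
  refine subsingleton_of_forall_eq 0 fun x => ?_
  obtain ⟨y, rfl⟩ := Abelian.Ext.covariant_sequence_exact₂ _ (ses hf hfg hg) x (h3.elim _ _)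
  rw [h1.elim y 0]; simp

lemma cA (hf : Function.Injective f) (hfg : Function.Exact f g) (hg : Function.Surjective g) {i : ℕ}
    (h3 : Subsingleton (EX R M C i)) (h2 : Subsingleton (EX R M B (i + 1))) :
    Subsingleton (EX R M A (i + 1)) := by
  refine subsingleton_of_forall_eq 0 fun x => ?_
  obtain ⟨y, rfl⟩ := Abelian.Ext.covariant_sequence_exact₁ _ (ses hf hfg hg) x (h2.elim _ _) rfl
  rw [h3.elim y 0]; simp

lemma cC (hf : Function.Injective f) (hfg : Function.Exact f g) (hg : Function.Surjective g) {i : ℕ}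
    (h2 : Subsingleton (EX R M B i)) (h1 : Subsingleton (EX R M A (i + 1))) :
    Subsingleton (EX R M C i) := by
  refine subsingleton_of_forall_eq 0 fun x => ?_
  obtain ⟨y, rfl⟩ := Abelian.Ext.covariant_sequence_exact₃ _ (ses hf hfg hg) x rfl (h1.elim _ _)
  rw [h2.elim y 0]; simp

lemma cA0 (hf : Function.Injective f) (h2 : Subsingleton (EX R M B 0)) :
    Subsingleton (EX R M A 0) := by
  have h2' : Subsingleton (M →ₗ[R] B) := mk0_bijective.injective.subsingleton
  have : Subsingleton (M →ₗ[R] A) := by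
    refine subsingleton_of_forall_eq 0 fun x => ?_
    ext m
    apply hf
    have := LinearMap.congr_fun (h2'.elim (f ∘ₗ x) 0) m
    simpa using this
  exact (Equiv.ofBijective _ (mk0_bijective (R := R) (M := M) (N := A))).symm.subsingleton

end SES

/-- the standard sequence for a regular element -/
lemma exact_smul_mkQ (x : R) :
    Function.Exact (x • (LinearMap.id : M →ₗ[R] M)) (Submodule.mkQ (x • (⊤ : Submodule R M))) := by
  intro m
  simp [Submodule.mem_smul_pointwise_iff_exists]

lemma inj_smul {x : R} (h : IsSMulRegular M x) :
    Function.Injective (x • (LinearMap.id : M →ₗ[R] M)) := fun _ _ hab => h hab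

variable [IsLocalRing R] [IsNoetherianRing R]

lemma vNak_smul [Module.Finite R M] [Module.Finite R N] {x : R}
    (hx : x ∈ IsLocalRing.maximalIdeal R) {i : ℕ}
    (h : ∀ e : EX R M N i, ∃ e', e = x • e') : Subsingleton (EX R M N i) := by
  have : (⊤ : Submodule R (EX R M N i)) = ⊥ := by
    apply Submodule.eq_bot_of_le_smul_of_le_jacobson_bot (Ideal.span {x}) _ Module.Finite.fg_top
    · intro e _
      obtain ⟨e', rfl⟩ := h e
      exact Submodule.smul_mem_smul (Ideal.mem_span_singleton_self x) trivial
    · rw [Ideal.span_singleton_le_iff_mem]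
      exact IsLocalRing.maximalIdeal_le_jacobson _ hx
  exact (Submodule.subsingleton_iff R).1 (subsingleton_of_bot_eq_top this.symm)

lemma vNak [Module.Finite R M] [Module.Finite R N] {x : R}
    (hx : x ∈ IsLocalRing.maximalIdeal R) (hreg : IsSMulRegular M x) {i : ℕ}
    (h : Subsingleton (EX R (QuotSMulTop x M) N (i + 1))) : Subsingleton (EX R M N i) := by
  apply vNak_smul hx
  intro e
  obtain ⟨y, rfl⟩ := Abelian.Ext.contravariant_sequence_exact₁
    (ses (inj_smul hreg) (exact_smul_mkQ x) (Submodule.mkQ_surjective _)) _ e (add_comm 1 i)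
    (h.elim _ _)
  exact ⟨y, mk0_smul_id _ _⟩

end P2
end Syz
end fileP2

section fileP3a
set_option linter.unusedSectionVars false
open CategoryTheory Pointwise

namespace Syz

section P3a
variable {R : Type u} [CommRing R] [IsLocalRing R] [IsNoetherianRing R]

/-- quotient by a weakly regular sequence, together with the fundamental class -/
structure Theta (xs : List R) (M Q : Type u) [AddCommGroup M] [Module R M]
    [AddCommGroup Q] [Module R Q] (π : M →ₗ[R] Q) (θ : EX R Q M xs.length) : Prop where
  surj : Function.Surjective π
  ker : LinearMap.ker π = Ideal.ofList xs • (⊤ : Submodule R M)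
  low : ∀ (N : Type u) [AddCommGroup N] [Module R N], (∀ x ∈ xs, ∀ n : N, x • n = 0) →
    ∀ i < xs.length, Subsingleton (EX R N M i)
  bij : ∀ (N : Type u) [AddCommGroup N] [Module R N], (∀ x ∈ xs, ∀ n : N, x • n = 0) →
    Function.Bijective (fun f : N →ₗ[R] Q => (mk0 f).comp θ (zero_add _))
  van : ∀ (N : Type u) [AddCommGroup N] [Module R N] (e : ℕ),
    (∀ i, e < i → Subsingleton (EX R M N i)) →
    ∀ i, e + xs.length < i → Subsingleton (EX R Q N i)
  desc : ∀ (N : Type u) [AddCommGroup N] [Module R N], Module.Finite R M → Module.Finite R N →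
    (∀ x ∈ xs, x ∈ IsLocalRing.maximalIdeal R) → ∀ i, Subsingleton (EX R Q N (i + xs.length)) →
    Subsingleton (EX R M N i)

lemma mk0_comp_mk0 {A B C : Type u} [AddCommGroup A] [Module R A] [AddCommGroup B] [Module R B]
  [AddCommGroup C] [Module R C] (f : A →ₗ[R] B) (g : B →ₗ[R] C) :
    (mk0 f).comp (mk0 g) (zero_add 0) = mk0 (g ∘ₗ f) := by
  rw [mk0, mk0, Abelian.Ext.mk₀_comp_mk₀]; rfl

lemma mk0_add {A B : Type u} [AddCommGroup A] [Module R A] [AddCommGroup B] [Module R B]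
   (f g : A →ₗ[R] B) : mk0 (f + g) = mk0 f + mk0 g := by
  rw [mk0, mk0, mk0, ← Abelian.Ext.mk₀_add]; rfl

lemma mk0_zero {A B : Type u} [AddCommGroup A] [Module R A] [AddCommGroup B] [Module R B] :
    mk0 (0 : A →ₗ[R] B) = 0 := by
  rw [mk0, ModuleCat.ofHom_zero, Abelian.Ext.mk₀_zero]

lemma theta (xs : List R) : ∀ (M : Type u) [AddCommGroup M] [Module R M],
    RingTheory.Sequence.IsWeaklyRegular M xs →
    ∃ (Q : Type u) (_ : AddCommGroup Q) (_ : Module R Q) (π : M →ₗ[R] Q)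
      (θ : EX R Q M xs.length), Theta xs M Q π θ := by
  induction xs with
  | nil =>
    intro M _ _ _
    refine ⟨M, inferInstance, inferInstance, LinearMap.id, mk0 LinearMap.id, ?_, ?_, ?_, ?_, ?_, ?_⟩
    · exact fun x => ⟨x, rfl⟩
    · simp [LinearMap.ker_id]
    · intro N _ _ _ i hi; simp at hi
    · intro N _ _ _
      have : (fun f : N →ₗ[R] M => (mk0 f).comp (mk0 LinearMap.id) (zero_add 0)) = mk0 := by
        funext f; rw [mk0_comp_mk0]
      show Function.Bijective (fun f : N →ₗ[R] M => (mk0 f).comp (mk0 LinearMap.id) (zero_add 0))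
      rw [this]; exact mk0_bijective
    · intro N _ _ e h i hi; exact h i (by simpa using hi)
    · intro N _ _ _ _ _ i h; exact h
  | cons x xs ih =>
    intro M _ _ hreg
    rw [RingTheory.Sequence.isWeaklyRegular_cons_iff] at hreg
    obtain ⟨hx, hxs⟩ := hreg
    obtain ⟨Q, _, _, π, θ, H⟩ := ih (QuotSMulTop x M) hxs
    have S := ses (inj_smul hx) (exact_smul_mkQ x) (Submodule.mkQ_surjective (x • (⊤ : Submodule R M)))
    have key : ∀ (N : Type u) [AddCommGroup N] [Module R N], (∀ n : N, x • n = 0) → ∀ i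
        (e : EX R N M (i + 1)), ∃ e' : EX R N (QuotSMulTop x M) i, e = e'.comp S.extClass rfl := by
      intro N _ _ hN i e
      obtain ⟨y, hy⟩ := Abelian.Ext.covariant_sequence_exact₁ _ S e (by
        have h := comp_mk0_smul_id x e
        rw [smul_eq_zero_left hN] at h
        exact h) rfl
      exact ⟨y, hy.symm⟩
    have low : ∀ (N : Type u) [AddCommGroup N] [Module R N], (∀ y ∈ x :: xs, ∀ n : N, y • n = 0) →
        ∀ i < (x :: xs).length, Subsingleton (EX R N M i) := by
      intro N _ _ hN i hi
      refine subsingleton_of_forall_eq 0 fun e => ?_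
      cases i with
      | zero =>
        obtain ⟨f, rfl⟩ := mk0_bijective.surjective e
        have : f = 0 := by
          ext n
          apply hx
          show x • f n = x • 0
          rw [← map_smul, hN x (by simp) n]; simp
        rw [this, mk0_zero]
      | succ i =>
        obtain ⟨e', rfl⟩ := key N (hN x (by simp)) i e
        rw [(H.low N (fun y hy => hN y (by simp [hy])) i (by simpa using hi)).elim e' 0]
        simp
    refine ⟨Q, inferInstance, inferInstance, π ∘ₗ Submodule.mkQ _, θ.comp S.extClass rfl, ?_, ?_, low, ?_, ?_, ?_⟩
    · exact H.surj.comp (Submodule.mkQ_surjective _)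
    · rw [LinearMap.ker_comp, H.ker, Ideal.ofList_cons, Submodule.sup_smul,
        Submodule.ideal_span_singleton_smul, ← Submodule.comap_map_mkQ, Submodule.map_smul'',
        Submodule.map_top, Submodule.range_mkQ]
    · intro N _ _ hN
      have hN' : ∀ y ∈ xs, ∀ n : N, y • n = 0 := fun y hy => hN y (by simp [hy])
      have as : ∀ f : N →ₗ[R] Q, (mk0 f).comp (θ.comp S.extClass rfl) (zero_add _) =
          ((mk0 f).comp θ (zero_add _)).comp S.extClass rfl := by
        intro f
        rw [Abelian.Ext.comp_assoc _ _ _ (zero_add _) rfl (by simp)]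
      constructor
      · intro f g hfg
        simp only at hfg
        rw [as, as, ← sub_eq_zero, sub_eq_add_neg, ← Abelian.Ext.neg_comp,
          ← Abelian.Ext.add_comp, ← sub_eq_add_neg] at hfg
        obtain ⟨w, hw⟩ := Abelian.Ext.covariant_sequence_exact₃ _ S _ rfl hfg
        rw [(low N hN xs.length (by simp)).elim w 0, Abelian.Ext.zero_comp] at hw
        exact (H.bij N hN').injective (sub_eq_zero.1 hw.symm)
      · intro e
        obtain ⟨e', rfl⟩ := key N (hN x (by simp)) _ e
        obtain ⟨f, rfl⟩ := (H.bij N hN').surjective e'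
        exact ⟨f, as f⟩
    · intro N _ _ e h i hi
      apply H.van N (e + 1)
      · intro j hj
        obtain ⟨j, rfl⟩ : ∃ l, j = l + 1 := ⟨j - 1, by omega⟩
        exact vC (inj_smul hx) (exact_smul_mkQ x) (Submodule.mkQ_surjective _) (h j (by omega)) (h _ (by omega))
      · simp at hi; omega
    · intro N _ _ hM hN hm i h
      apply vNak (hm x (by simp)) hx
      apply H.desc N _ hN (fun y hy => hm y (by simp [hy]))
      · have : i + 1 + xs.length = i + (x :: xs).length := by simp; omega
        rw [this]; exact h
      · infer_instance

end P3a
end Syz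
end fileP3a

section fileP3b
set_option linter.unusedSectionVars false
open CategoryTheory Pointwise

namespace Syz

section P3b
variable {R : Type u} [CommRing R] [IsLocalRing R] [IsNoetherianRing R]

local notation "𝔪" => IsLocalRing.maximalIdeal R

lemma bass (n : ℕ) (h1 : ∀ (N : Type u) [AddCommGroup N] [Module R N] [Module.Finite R N],
      Subsingleton (EX R N R (n + 1)))
    (hk : Subsingleton (EX R (R ⧸ 𝔪) R n)) :
    ∀ (N : Type u) [AddCommGroup N] [Module R N] [Module.Finite R N], Subsingleton (EX R N R n) := by
  intro N _ _ _
  refine IsNoetherianRing.induction_on_isQuotientEquivQuotientPrime R (M := N) inferInstance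
    (motive := fun N _ _ _ => Subsingleton (EX R N R n)) ?_ ?_ ?_
  · intro N _ _ _ _; exact vzero_left n
  · intro N _ _ _ p e
    have : Subsingleton (EX R (R ⧸ p.asIdeal) R n) := by
      by_cases hp : p.asIdeal = 𝔪
      · rw [hp]; exact hk
      · have hlt : p.asIdeal < 𝔪 := lt_of_le_of_ne (IsLocalRing.le_maximalIdeal p.2.ne_top) hp
        obtain ⟨x, hx, hxp⟩ := SetLike.exists_of_lt hlt
        refine vNak hx ?_ (h1 _)
        rw [isSMulRegular_iff_right_eq_zero_of_smul]
        intro a ha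
        obtain ⟨a, rfl⟩ := Ideal.Quotient.mk_surjective a
        rw [← Ideal.Quotient.mk_eq_mk, ← Submodule.Quotient.mk_smul, Ideal.Quotient.mk_eq_mk,
          Ideal.Quotient.eq_zero_iff_mem] at ha
        exact Ideal.Quotient.eq_zero_iff_mem.2 ((p.2.mem_or_mem ha).resolve_left hxp)
    exact vcongr_left e.symm
  · intro N₁ _ _ _ N₂ _ _ _ N₃ _ _ _ f g hf hg hfg h₁ h₃
    exact vB hf hfg hg h₁ h₃

lemma supp_k : Module.support R (R ⧸ 𝔪) = PrimeSpectrum.zeroLocus (𝔪 : Set R) := by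
  rw [Module.support_eq_zeroLocus, Ideal.annihilator_quotient]

lemma exists_nonzero_ext (n0 : ℕ)
    (h : ∀ (M : Type u) [AddCommGroup M] [Module R M] (i : ℕ), n0 < i → Subsingleton (EX R M R i)) :
    ∃ d, ¬ Subsingleton (EX R (R ⧸ 𝔪) R d) := by
  by_contra! hcon
  have : ∀ j ≤ n0 + 1, ∀ (N : Type u) [AddCommGroup N] [Module R N] [Module.Finite R N],
      Subsingleton (EX R N R (n0 + 1 - j)) := by
    intro j
    induction j with
    | zero => intro _ N _ _ _; exact h N _ (by omega)
    | succ j ih =>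
      intro hj
      apply bass
      · have : n0 + 1 - (j + 1) + 1 = n0 + 1 - j := by omega
        rw [this]; exact ih (by omega)
      · exact hcon _
  have h0 := this (n0 + 1) le_rfl R
  rw [Nat.sub_self] at h0
  have h1 : Subsingleton (R →ₗ[R] R) := mk0_bijective.injective.subsingleton
  have := LinearMap.congr_fun (h1.elim LinearMap.id 0) 1
  simp at this

/-- maps from the residue field given by socle elements -/
noncomputable def kmap {Q : Type u} [AddCommGroup Q] [Module R Q] (q : Q) (hq : ∀ x ∈ 𝔪, x • q = 0) :
    (R ⧸ 𝔪) →ₗ[R] Q :=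
  Submodule.liftQ 𝔪 (LinearMap.toSpanSingleton R Q q) (by
    intro x hx; simpa using hq x hx)

lemma kmap_one {Q : Type u} [AddCommGroup Q] [Module R Q] (q : Q) (hq : ∀ x ∈ 𝔪, x • q = 0) :
    kmap q hq 1 = q := by
  show Submodule.liftQ 𝔪 (LinearMap.toSpanSingleton R Q q) _ (Submodule.Quotient.mk 1) = q
  rw [Submodule.liftQ_apply]; simp

lemma k_smul_one (c : R) : (Ideal.Quotient.mk 𝔪 c) = c • (1 : R ⧸ 𝔪) := by
  rw [Algebra.smul_def, mul_one]; rfl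

lemma k_ext {Q : Type u} [AddCommGroup Q] [Module R Q] {f g : (R ⧸ 𝔪) →ₗ[R] Q} (h : f 1 = g 1) :
    f = g := by
  ext; simpa using h

lemma k_killed (x : R) (hx : x ∈ 𝔪) (a : R ⧸ 𝔪) : x • a = 0 := by
  obtain ⟨a, rfl⟩ := Ideal.Quotient.mk_surjective a
  rw [← Ideal.Quotient.mk_eq_mk, ← Submodule.Quotient.mk_smul, Ideal.Quotient.mk_eq_mk,
          Ideal.Quotient.eq_zero_iff_mem]
  exact Ideal.mul_mem_right _ _ hx

lemma k_inj {Q : Type u} [AddCommGroup Q] [Module R Q] {f : (R ⧸ 𝔪) →ₗ[R] Q} (h : f ≠ 0) :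
    Function.Injective f := by
  rw [injective_iff_map_eq_zero]
  intro a ha
  obtain ⟨a, rfl⟩ := Ideal.Quotient.mk_surjective a
  rw [Ideal.Quotient.eq_zero_iff_mem]
  by_contra hc
  have hu : IsUnit a := by simpa using hc
  apply h
  apply k_ext
  rw [k_smul_one, map_smul] at ha
  simpa using (hu.smul_eq_zero).1 ha

/-- Main structural consequences of Gorensteinness -/
lemma lemG (n0 : ℕ)
    (h : ∀ (M : Type u) [AddCommGroup M] [Module R M] (i : ℕ), n0 < i → Subsingleton (EX R M R i)) :
    ∃ xs : List R, (∀ x ∈ xs, x ∈ 𝔪) ∧ RingTheory.Sequence.IsRegular R xs ∧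
      (∀ p : Ideal R, p.IsPrime → Ideal.ofList xs ≤ p → p = 𝔪) ∧
      ∃ u, u ∉ Ideal.ofList xs ∧ (∀ x ∈ 𝔪, x * u ∈ Ideal.ofList xs) ∧
        ∀ v, (∀ x ∈ 𝔪, x * v ∈ Ideal.ofList xs) → ∃ c, v - c * u ∈ Ideal.ofList xs := by
  classical
  have hex := exists_nonzero_ext n0 h
  obtain ⟨xs, hlen, hmem, hreg⟩ := ModuleCat.exists_isRegular_of_exists_subsingleton_ext 𝔪
    (Nat.find hex) (ModuleCat.of R R) (by
      rw [lt_top_iff_ne_top]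
      simpa using Ideal.IsPrime.ne_top inferInstance) (ModuleCat.of R (R ⧸ 𝔪)) supp_k
    (fun i hi => not_not.1 (Nat.find_min hex hi))
  have hd := Nat.find_spec hex
  rw [← hlen] at hd
  change RingTheory.Sequence.IsRegular R xs at hreg
  obtain ⟨Q, _, _, π, θ, T⟩ := theta xs R hreg.toIsWeaklyRegular
  have hker : ∀ r, π r = 0 ↔ r ∈ Ideal.ofList xs := by
    intro r; rw [← LinearMap.mem_ker, T.ker]; simp
  have hQk : ∀ x ∈ xs, ∀ n : Q, x • n = 0 := by
    intro x hx n
    obtain ⟨r, rfl⟩ := T.surj n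
    rw [← map_smul, hker]
    exact Ideal.mul_mem_right _ _ (Ideal.subset_span hx)
  have hkk : ∀ x ∈ xs, ∀ n : R ⧸ 𝔪, x • n = 0 := fun x hx n => k_killed x (hmem x hx) n
  have hQf : Module.Finite R Q := Module.Finite.of_surjective π T.surj
  obtain ⟨f0, hf0⟩ : ∃ f0 : (R ⧸ 𝔪) →ₗ[R] Q, f0 ≠ 0 := by
    by_contra! hc
    apply hd
    refine subsingleton_of_forall_eq 0 fun e => ?_
    obtain ⟨f, rfl⟩ := (T.bij _ hkk).surjective e
    simp only
    rw [hc f, mk0_zero]; simp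
  have hf0i := k_inj hf0
  have hP : ∀ (N : Type u) [AddCommGroup N] [Module R N] [Module.Finite R N],
      Subsingleton (EX R N R (xs.length + 1)) := by
    have : ∀ j, (∀ (N : Type u) [AddCommGroup N] [Module R N] [Module.Finite R N],
      Subsingleton (EX R N R (xs.length + 1 + j))) → (∀ (N : Type u) [AddCommGroup N] [Module R N] [Module.Finite R N],
      Subsingleton (EX R N R (xs.length + 1))) := by
      intro j
      induction j with
      | zero => intro h; exact h
      | succ j ih =>
        intro h
        apply ih
        apply bass _ h
        refine vA hf0i (LinearMap.exact_map_mkQ_range f0) (Submodule.mkQ_surjective _) ?_ (h _)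
        refine T.van R 0 ?_ _ (by show 0 + xs.length < xs.length + 1 + j; omega)
        intro i hi
        obtain ⟨i, rfl⟩ : ∃ l, i = l + 1 := ⟨i - 1, by omega⟩
        have : Projective (ModuleCat.of R R) := ModuleCat.projective_of_free (Module.Basis.singleton Unit R)
        exact subsingleton_of_forall_eq 0 fun e => Abelian.Ext.eq_zero_of_projective e
    apply this n0
    intro N _ _ _
    exact h N _ (by omega)
  refine ⟨xs, hmem, hreg, ?_, ?_⟩
  · intro p hp hJ
    by_contra hpm
    have hlt : p < 𝔪 := lt_of_le_of_ne (IsLocalRing.le_maximalIdeal hp.ne_top) hpm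
    obtain ⟨x, hx, hxp⟩ := SetLike.exists_of_lt hlt
    have hsub : Subsingleton (EX R (R ⧸ p) R xs.length) := by
      refine vNak hx ?_ (hP _)
      rw [isSMulRegular_iff_right_eq_zero_of_smul]
      intro a ha
      obtain ⟨a, rfl⟩ := Ideal.Quotient.mk_surjective a
      rw [← Ideal.Quotient.mk_eq_mk, ← Submodule.Quotient.mk_smul, Ideal.Quotient.mk_eq_mk,
          Ideal.Quotient.eq_zero_iff_mem] at ha
      exact Ideal.Quotient.eq_zero_iff_mem.2 ((hp.mem_or_mem ha).resolve_left hxp)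
    have hkp : ∀ x ∈ xs, ∀ n : R ⧸ p, x • n = 0 := by
      intro x hx a
      obtain ⟨a, rfl⟩ := Ideal.Quotient.mk_surjective a
      rw [← Ideal.Quotient.mk_eq_mk, ← Submodule.Quotient.mk_smul, Ideal.Quotient.mk_eq_mk,
          Ideal.Quotient.eq_zero_iff_mem]
      exact Ideal.mul_mem_right _ _ (hJ (Ideal.subset_span hx))
    have h1 : Subsingleton ((R ⧸ p) →ₗ[R] Q) := (T.bij _ hkp).injective.subsingleton
    apply hf0
    apply k_ext
    exact LinearMap.congr_fun (h1.elim (f0 ∘ₗ Submodule.factor hlt.le) 0) (Submodule.Quotient.mk 1)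
  · obtain ⟨u, hu⟩ := T.surj (f0 1)
    refine ⟨u, ?_, ?_, ?_⟩
    · rw [← hker, hu]
      intro hc; exact hf0 (k_ext (by simpa using hc))
    · intro x hx
      rw [← hker, ← smul_eq_mul, map_smul, hu, ← map_smul, k_killed x hx, map_zero]
    · intro v hv
      let fv := kmap (π v) (fun x hx => by rw [← map_smul, hker]; exact hv x hx)
      have hfv : fv 1 = π v := kmap_one _ _
      obtain ⟨y, hy⟩ := Abelian.Ext.contravariant_sequence_exact₁
        (ses hf0i (LinearMap.exact_map_mkQ_range f0) (Submodule.mkQ_surjective _)) _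
        ((mk0 fv).comp θ (zero_add _)) (add_comm 1 _) ((hP _).elim _ _)
      obtain ⟨g, rfl⟩ := (T.bij Q hQk).surjective y
      change (mk0 f0).comp ((mk0 g).comp θ (zero_add _)) (zero_add _) = _ at hy
      rw [← Abelian.Ext.comp_assoc _ _ _ (zero_add 0) (zero_add _) (by simp), mk0_comp_mk0] at hy
      have hg := (T.bij _ hkk).injective hy
      obtain ⟨c, hc⟩ := T.surj (g (π 1))
      refine ⟨c, ?_⟩
      have e1 : g (π u) = π v := by rw [hu, ← hfv, ← hg]; rfl
      have e2 : π u = u • π 1 := by rw [← map_smul]; simp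
      rw [← hker, map_sub, ← e1, e2, map_smul, ← hc, ← map_smul, smul_eq_mul, mul_comm, sub_self]

end P3b
end Syz
end fileP3b

section fileP4a
set_option linter.unusedSectionVars false
open CategoryTheory Pointwise

namespace Syz

section P4a
variable {R : Type u} [CommRing R] [IsLocalRing R] [IsNoetherianRing R]

local notation "𝔪" => IsLocalRing.maximalIdeal R

lemma mk0_smul {A B : Type u} [AddCommGroup A] [Module R A] [AddCommGroup B] [Module R B]
   (c : R) (f : A →ₗ[R] B) : mk0 (c • f) = c • mk0 f := by
  rw [mk0, mk0, ← Abelian.Ext.mk₀_smul]; rfl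

lemma map_mem_max {S : Type u} [CommRing S] [Algebra R S] [IsLocalRing S]
    (hs : Function.Surjective (algebraMap R S)) (x : R) :
    algebraMap R S x ∈ IsLocalRing.maximalIdeal S ↔ x ∈ 𝔪 := by
  have : IsLocalHom (algebraMap R S) := IsLocalHom.of_surjective _ hs
  rw [IsLocalRing.mem_maximalIdeal, IsLocalRing.mem_maximalIdeal, mem_nonunits_iff, mem_nonunits_iff,
    isUnit_map_iff]

lemma extk {S : Type u} [CommRing S] [Algebra R S] [IsLocalRing S]
    (hs : Function.Surjective (algebraMap R S)) (ys : List R) (hm : ∀ y ∈ ys, y ∈ 𝔪)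
    (hreg : RingTheory.Sequence.IsWeaklyRegular S (ys.map (algebraMap R S)))
    (u : S) (hu : u ∉ Ideal.ofList (ys.map (algebraMap R S)))
    (hmu : ∀ x ∈ IsLocalRing.maximalIdeal S, x * u ∈ Ideal.ofList (ys.map (algebraMap R S)))
    (hcyc : ∀ v, (∀ x ∈ IsLocalRing.maximalIdeal S, x * v ∈ Ideal.ofList (ys.map (algebraMap R S))) →
      ∃ c, v - c * u ∈ Ideal.ofList (ys.map (algebraMap R S))) :
    (∀ i < ys.length, Subsingleton (EX R (R ⧸ 𝔪) S i)) ∧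
    ∃ e0 : EX R (R ⧸ 𝔪) S ys.length, e0 ≠ 0 ∧ ∀ e, ∃ c : R, e = c • e0 := by
  obtain ⟨Q, _, _, π, θ, T⟩ := theta (R := R) ys S
    ((RingTheory.Sequence.isWeaklyRegular_map_algebraMap_iff S S ys).1 hreg)
  have hkk : ∀ x ∈ ys, ∀ n : R ⧸ 𝔪, x • n = 0 := fun x hx n => k_killed x (hm x hx) n
  refine ⟨T.low _ hkk, ?_⟩
  have hker : ∀ r, π r = 0 ↔ r ∈ Ideal.ofList (ys.map (algebraMap R S)) := by
    intro r
    rw [← LinearMap.mem_ker, T.ker, Ideal.smul_top_eq_map, Ideal.map_ofList]; simp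
  have hsm : ∀ (x : R) (v : S), x • v = algebraMap R S x * v := fun x v => Algebra.smul_def x v
  have hq : ∀ x ∈ 𝔪, x • π u = 0 := by
    intro x hx
    rw [← map_smul, hker, hsm]
    exact hmu _ ((map_mem_max hs x).2 hx)
  refine ⟨(mk0 (kmap (π u) hq)).comp θ (zero_add _), ?_, ?_⟩
  · intro h0
    have h1 : (mk0 (0 : (R ⧸ 𝔪) →ₗ[R] Q)).comp θ (zero_add _) = 0 := by rw [mk0_zero]; simp
    have h2 := (T.bij _ hkk).injective (h0.trans h1.symm)
    have h3 := LinearMap.congr_fun h2 1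
    rw [kmap_one] at h3
    exact hu ((hker u).1 (by simpa using h3))
  · intro e
    obtain ⟨f, rfl⟩ := (T.bij _ hkk).surjective e
    obtain ⟨v, hv⟩ := T.surj (f 1)
    obtain ⟨c, hc⟩ := hcyc v (by
      intro x hx
      obtain ⟨x, rfl⟩ := hs x
      rw [← hsm, ← hker, map_smul, hv, ← map_smul, k_killed x ((map_mem_max hs x).1 hx), map_zero])
    obtain ⟨c, rfl⟩ := hs c
    refine ⟨c, ?_⟩
    simp only
    rw [← Abelian.Ext.smul_comp, ← mk0_smul]
    congr 2
    apply k_ext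
    rw [LinearMap.smul_apply, kmap_one, ← map_smul, ← hv, ← sub_eq_zero, ← map_sub, hker, hsm]
    exact hc

lemma chain (p : PrimeSpectrum R) (rs : List R) : ∀ (M : Type u) [AddCommGroup M] [Module R M]
    [Module.Finite R M], RingTheory.Sequence.IsWeaklyRegular M rs → p ∈ Module.support R M →
    (∀ r ∈ rs, r ∈ p.asIdeal) →
    ∃ c : LTSeries (PrimeSpectrum R), c.length = rs.length ∧ c.last = p ∧
      c.head ∈ Module.support R M := by
  induction rs with
  | nil =>
    intro M _ _ _ _ hp _
    exact ⟨RelSeries.singleton _ p, rfl, rfl, hp⟩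
  | cons x rs ih =>
    intro M _ _ _ hreg hp hr
    rw [RingTheory.Sequence.isWeaklyRegular_cons_iff] at hreg
    obtain ⟨c, hc1, hc2, hc3⟩ := ih (QuotSMulTop x M) hreg.2 (by
      rw [Module.support_quotSMulTop]
      exact ⟨hp, by simpa using hr x (by simp)⟩) (fun r h => hr r (by simp [h]))
    rw [Module.support_quotSMulTop] at hc3
    obtain ⟨r, hrm, hrle⟩ := Ideal.exists_minimalPrimes_le (Module.mem_support_iff_of_finite.mp hc3.1)
    have hlt : (⟨r, hrm.1.1⟩ : PrimeSpectrum R) < c.head := by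
      refine lt_of_le_of_ne hrle ?_
      intro h
      apply hreg.1.notMem_of_mem_minimalPrimes hrm
      have := hc3.2
      rw [← h] at this
      simpa using this
    refine ⟨c.cons _ hlt, by simp [hc1], by simp [hc2], ?_⟩
    rw [RelSeries.head_cons]
    exact Module.mem_support_iff_of_finite.mpr hrm.1.2

end P4a
end Syz
end fileP4a

section fileP4b
set_option linter.unusedSectionVars false
open CategoryTheory Pointwise

namespace Syz

section P4b
variable {R : Type u} [CommRing R] [IsLocalRing R] [IsNoetherianRing R]

local notation "𝔪" => IsLocalRing.maximalIdeal R

lemma reg_mem {J : Ideal R} {x v : R} (h : IsSMulRegular (R ⧸ (J • (⊤ : Submodule R R))) x)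
    (hv : x * v ∈ J) : v ∈ J := by
  rw [isSMulRegular_iff_right_eq_zero_of_smul] at h
  have := h (Submodule.Quotient.mk v) (by
    rw [← Submodule.Quotient.mk_smul, Submodule.Quotient.mk_eq_zero]
    simpa using hv)
  rw [Submodule.Quotient.mk_eq_zero] at this
  simpa using this

lemma reg3_of {a b c : R} (h : RingTheory.Sequence.IsWeaklyRegular R [a, b, c]) : Reg3 a b c := by
  have h0 := h.regular_mod_prev 0 (by simp)
  have h1 := h.regular_mod_prev 1 (by simp)
  have h2 := h.regular_mod_prev 2 (by simp)
  refine ⟨?_, ?_, ?_⟩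
  · intro v hv
    have := reg_mem h0 (v := v) (by simp [hv])
    simpa using this
  · intro v w hv
    have := reg_mem h1 (v := v) (by
      simp only [List.getElem_cons_succ, List.getElem_cons_zero, List.take_succ_cons, List.take_zero,
        Ideal.ofList_singleton, Ideal.mem_span_singleton]
      exact ⟨w, hv⟩)
    simp only [List.take_succ_cons, List.take_zero,
        Ideal.ofList_singleton, Ideal.mem_span_singleton] at this
    exact this
  · intro v w w' hv
    have := reg_mem h2 (v := v) (by
      simp only [List.getElem_cons_succ, List.getElem_cons_zero, List.take_succ_cons, List.take_zero,
        Ideal.ofList_cons, Ideal.ofList_nil, sup_bot_eq]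
      rw [hv]
      exact Submodule.add_mem_sup (Ideal.mem_span_singleton.2 ⟨w, rfl⟩) (Ideal.mem_span_singleton.2 ⟨w', rfl⟩))
    simp only [List.take_succ_cons, List.take_zero,
        Ideal.ofList_cons, Ideal.ofList_nil, sup_bot_eq] at this
    obtain ⟨y, hy, z, hz, rfl⟩ := Submodule.mem_sup.1 this
    obtain ⟨y, rfl⟩ := Ideal.mem_span_singleton.1 hy
    obtain ⟨z, rfl⟩ := Ideal.mem_span_singleton.1 hz
    exact ⟨y, z, rfl⟩

lemma partIII (I : Ideal R) [IsLocalRing (R ⧸ I)] (nR nS : ℕ)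
    (hR : ∀ (M : Type u) [AddCommGroup M] [Module R M] (i : ℕ), nR < i → Subsingleton (EX R M R i))
    (hS : ∀ (M : Type u) [AddCommGroup M] [Module (R ⧸ I) M] (i : ℕ), nS < i →
      Subsingleton (EX (R ⧸ I) M (R ⧸ I) i))
    (hh1 : ∀ p : PrimeSpectrum R, I ≤ p.asIdeal → 3 ≤ Order.height p)
    (hh2 : ∀ n : ℕ, (∀ p : PrimeSpectrum R, I ≤ p.asIdeal → (n : ℕ∞) ≤ Order.height p) → n ≤ 3) :
    ∃ s : ℕ, (∃ a b c, Reg3 a b c ∧ a ∈ I ∧ b ∈ I ∧ c ∈ I) ∧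
      (∀ i < s + 3, Subsingleton (EX R (R ⧸ 𝔪) R i)) ∧
      (¬ Subsingleton (EX R (R ⧸ 𝔪) R (s + 3))) ∧
      (∀ i < s, Subsingleton (EX R (R ⧸ 𝔪) (R ⧸ I) i)) ∧
      ∃ e0 : EX R (R ⧸ 𝔪) (R ⧸ I) s, e0 ≠ 0 ∧ ∀ e, ∃ c : R, e = c • e0 := by
  obtain ⟨xs, hxm, hxr, hxp, u, hu, hmu, hcu⟩ := lemG nR hR
  obtain ⟨ys', hym, hyr, hyp, w, hw, hmw, hcw⟩ := lemG nS hS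
  have hs : Function.Surjective (algebraMap R (R ⧸ I)) := Ideal.Quotient.mk_surjective
  obtain ⟨ys, rfl⟩ : ∃ ys : List R, ys.map (algebraMap R (R ⧸ I)) = ys' :=
    (List.map_surjective_iff.2 hs) ys'
  have hym' : ∀ y ∈ ys, y ∈ 𝔪 := fun y hy => (map_mem_max hs y).1 (hym _ (List.mem_map_of_mem hy))
  have hid : Function.Surjective (algebraMap R R) := fun x => ⟨x, rfl⟩
  have hidm : xs.map (algebraMap R R) = xs := by
    rw [Algebra.algebraMap_self]; simp
  obtain ⟨k1, e1, he1, -⟩ := extk hid xs hxm (by rw [hidm]; exact hxr.toIsWeaklyRegular) u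
    (by rw [hidm]; exact hu) (by rw [hidm]; exact hmu) (by rw [hidm]; exact hcu)
  obtain ⟨k2, k3⟩ := extk hs ys hym' hyr.toIsWeaklyRegular w hw hmw hcw
  have hyR := (RingTheory.Sequence.isWeaklyRegular_map_algebraMap_iff (R ⧸ I) (R ⧸ I) ys).1 hyr.toIsWeaklyRegular
  have hI1 : I ≠ ⊤ := Ideal.Quotient.nontrivial_iff.1 inferInstance
  have hsuppI : ∀ p : PrimeSpectrum R, p ∈ Module.support R (R ⧸ I) ↔ I ≤ p.asIdeal := by
    intro p
    rw [Module.support_eq_zeroLocus, Ideal.annihilator_quotient]; rfl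
  -- the Ext vanishing
  have hvan : ∀ i, i + ys.length < xs.length → Subsingleton (EX R (R ⧸ I) R i) := by
    intro i hi
    obtain ⟨Q, _, _, π, θ, T⟩ := theta ys (R ⧸ I) hyR
    have hker : ∀ r, π r = 0 ↔ r ∈ Ideal.ofList (ys.map (algebraMap R (R ⧸ I))) := by
      intro r
      rw [← LinearMap.mem_ker, T.ker, Ideal.smul_top_eq_map, Ideal.map_ofList]; simp
    have hQf : Module.Finite R Q := Module.Finite.of_surjective π T.surj
    apply T.desc R inferInstance inferInstance hym'
    refine ModuleCat.subsingleton_ext_of_exists_isRegular 𝔪 (ModuleCat.of R Q) ?_ (ModuleCat.of R R) ?_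
      xs hxm hxr _ hi
    · intro p hp
      have hp' := Module.mem_support_iff_of_finite.1 hp
      have hann : ∀ r : R, algebraMap R (R ⧸ I) r ∈ Ideal.ofList (ys.map (algebraMap R (R ⧸ I))) →
          r ∈ p.asIdeal := by
        intro r hr
        apply hp'
        rw [Module.mem_annihilator]
        intro q
        obtain ⟨v, rfl⟩ := T.surj q
        rw [← map_smul, hker, Algebra.smul_def]
        exact Ideal.mul_mem_right _ _ hr
      have hIp : I ≤ p.asIdeal := by
        intro r hr
        apply hann
        rw [Ideal.Quotient.algebraMap_eq, Ideal.Quotient.eq_zero_iff_mem.2 hr]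
        exact zero_mem _
      have hpm : (p.asIdeal.map (Ideal.Quotient.mk I)).IsPrime :=
        Ideal.map_isPrime_of_surjective Ideal.Quotient.mk_surjective (by simpa using hIp)
      have hcm : (p.asIdeal.map (Ideal.Quotient.mk I)).comap (Ideal.Quotient.mk I) = p.asIdeal := by
        rw [Ideal.comap_map_of_surjective _ Ideal.Quotient.mk_surjective]
        rw [← RingHom.ker_eq_comap_bot, Ideal.mk_ker]
        exact sup_eq_left.2 hIp
      have := hyp _ hpm (by
        intro r hr
        obtain ⟨r, rfl⟩ := hs r
        exact Ideal.mem_map_of_mem _ (hann r hr))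
      intro x hx
      show x ∈ p.asIdeal
      rw [← hcm, Ideal.mem_comap, this]
      exact (map_mem_max hs x).2 hx
    · rw [lt_top_iff_ne_top]
      simpa using Ideal.IsPrime.ne_top inferInstance
  obtain ⟨rs, hrl, hrI, hrr⟩ := ModuleCat.exists_isRegular_of_exists_subsingleton_ext I
    (xs.length - ys.length) (ModuleCat.of R R) (by
      rw [lt_top_iff_ne_top]
      simpa using hI1) (ModuleCat.of R (R ⧸ I)) (by
        show Module.support R (R ⧸ I) = _
        rw [Module.support_eq_zeroLocus, Ideal.annihilator_quotient])
    (fun i hi => hvan i (by omega))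
  change RingTheory.Sequence.IsRegular R rs at hrr
  have hle : rs.length ≤ 3 := by
    apply hh2
    intro p hp
    obtain ⟨c, hc1, hc2, -⟩ := chain p rs R hrr.toIsWeaklyRegular (by
      rw [Module.mem_support_iff_of_finite, Module.annihilator_eq_bot.2 inferInstance]; exact bot_le) (fun r hr => hp (hrI r hr))
    rw [← hc1]
    exact Order.length_le_height hc2.le
  have hge : 3 + ys.length ≤ xs.length := by
    obtain ⟨c, hc1, hc2, hc3⟩ := chain ⟨𝔪, inferInstance⟩ ys (R ⧸ I) hyR
      ((hsuppI _).2 (IsLocalRing.le_maximalIdeal hI1)) hym'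
    obtain ⟨c', hc1', hc2'⟩ := Order.exists_series_of_le_height (n := 3) c.head (hh1 _ ((hsuppI _).1 hc3))
    have h4 := Order.length_le_height_last (p := c'.smash c hc1')
    have h5 : (c'.smash c hc1').last = ⟨𝔪, inferInstance⟩ := by rw [RelSeries.last_smash, hc2]
    rw [h5] at h4
    have h6 : Order.height (⟨𝔪, inferInstance⟩ : PrimeSpectrum R) ≤ xs.length := by
      rw [← PrimeSpectrum.height_eq_orderHeight]
      classical
      refine (Ideal.height_le_card_of_mem_minimalPrimes_span_finset (s := xs.toFinset) ?_).trans ?_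
      · refine ⟨⟨inferInstance, ?_⟩, ?_⟩
        · rw [Ideal.span_le]; intro x hx; exact hxm x (by simpa using hx)
        · intro q hq _
          rw [hxp q hq.1 (by
            refine le_trans (Ideal.span_mono ?_) hq.2
            intro x hx; simpa using hx)]
      · exact_mod_cast List.toFinset_card_le xs
    have h7 := h4.trans h6
    rw [RelSeries.smash_length, hc2', hc1] at h7
    exact_mod_cast h7
  have hx3 : xs.length = ys.length + 3 := by omega
  refine ⟨ys.length, ?_, ?_, ?_, k2, k3⟩
  · have : rs.length = 3 := by omega
    obtain ⟨a, b, c, rfl⟩ := List.length_eq_three.1 this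
    exact ⟨a, b, c, reg3_of hrr.toIsWeaklyRegular, hrI a (by simp), hrI b (by simp), hrI c (by simp)⟩
  · rw [← hx3]; exact k1
  · rw [← hx3]
    intro h
    exact he1 (h.elim _ _)

end P4b
end Syz
end fileP4b

section fileP5a
set_option linter.unusedSectionVars false
open CategoryTheory Pointwise

namespace Syz

section P5a
variable {R : Type u} [CommRing R] [IsLocalRing R] [IsNoetherianRing R]

local notation "𝔪" => IsLocalRing.maximalIdeal R

lemma mincover (M : Type u) [AddCommGroup M] [Module R M] [Module.Finite R M] :
    ∃ (ι : Type u) (_ : Fintype ι) (f : (ι → R) →ₗ[R] M), Function.Surjective f ∧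
      ∀ v, f v = 0 → ∀ j, v j ∈ 𝔪 := by
  classical
  have hex : ∃ n, ∃ t : Finset M, t.card = n ∧ Submodule.span R (t : Set M) = ⊤ := by
    obtain ⟨t, ht⟩ := (Module.Finite.fg_top : (⊤ : Submodule R M).FG)
    exact ⟨_, t, rfl, ht⟩
  obtain ⟨t, htc, hts⟩ := Nat.find_spec hex
  refine ⟨t, inferInstance, Fintype.linearCombination R (fun i : t => (i : M)), ?_, ?_⟩
  · rw [← LinearMap.range_eq_top, Fintype.range_linearCombination]
    rw [← hts]; congr 1; exact Subtype.range_coe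
  · intro v hv j
    by_contra hj
    have hu : IsUnit (v j) := by simpa using hj
    have hlt : (t.erase j).card < Nat.find hex := by
      rw [← htc]; exact Finset.card_erase_lt_of_mem j.2
    refine Nat.find_min hex hlt ⟨_, rfl, ?_⟩
    rw [eq_top_iff, ← hts, Submodule.span_le]
    intro m hm
    by_cases hmj : m = j
    · rw [Fintype.linearCombination_apply, ← Finset.add_sum_erase _ _ (Finset.mem_univ j)] at hv
      have h1 : v j • (j : M) ∈ Submodule.span R (↑(t.erase (j : M)) : Set M) := by
        rw [eq_neg_of_add_eq_zero_left hv]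
        refine neg_mem (Submodule.sum_mem _ fun i hi => Submodule.smul_mem _ _ (Submodule.subset_span ?_))
        have := Finset.ne_of_mem_erase hi
        simp only [Finset.coe_erase, Set.mem_sdiff, Finset.mem_coe, Set.mem_singleton_iff]
        exact ⟨i.2, fun h => this (Subtype.ext h)⟩
      rw [hmj]
      obtain ⟨w, hw⟩ := hu
      have := Submodule.smul_mem _ (↑w⁻¹ : R) h1
      rw [← hw, smul_smul, Units.inv_mul, one_smul] at this
      exact this
    · exact Submodule.subset_span (by simp [hmj]; exact hm)

variable {K : Type u} [AddCommGroup K] [Module R K] {X : Type u} [AddCommGroup X] [Module R X]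

lemma comp_comp_mk0 {A B : Type u} [AddCommGroup A] [Module R A] [AddCommGroup B] [Module R B]
    {i : ℕ} (e : EX R X K i) (f : K →ₗ[R] A) (g : A →ₗ[R] B) :
    (e.comp (mk0 f) (add_zero i)).comp (mk0 g) (add_zero i) = e.comp (mk0 (g ∘ₗ f)) (add_zero i) := by
  rw [Abelian.Ext.comp_assoc _ _ _ (add_zero i) (zero_add 0) (by simp), mk0_comp_mk0]

lemma mk0_sum {A B : Type u} [AddCommGroup A] [Module R A] [AddCommGroup B] [Module R B]
    {ι : Type*} [Fintype ι] (f : ι → (A →ₗ[R] B)) : mk0 (∑ i, f i) = ∑ i, mk0 (f i) := by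
  exact map_sum (AddMonoidHom.mk' (mk0 : (A →ₗ[R] B) → EX R A B 0) mk0_add) f Finset.univ

/-- an element of Ext into a free module is determined by its coordinates -/
lemma ext_basis {ι : Type*} [Fintype ι] (b : Module.Basis ι R K) {i : ℕ} (e : EX R X K i)
    (h : ∀ j, e.comp (mk0 (b.coord j)) (add_zero i) = 0) : e = 0 := by
  have hid : (LinearMap.id : K →ₗ[R] K) = ∑ j, (LinearMap.toSpanSingleton R K (b j)) ∘ₗ b.coord j := by
    ext x
    simp [b.sum_repr]
  have h1 : e.comp (mk0 (LinearMap.id : K →ₗ[R] K)) (add_zero i) = e := by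
    have := comp_mk0_smul_id (1 : R) e
    simpa using this
  rw [← h1, hid, mk0_sum, Abelian.Ext.comp_sum]
  apply Finset.sum_eq_zero
  intro j _
  rw [← comp_comp_mk0, h j, Abelian.Ext.zero_comp]

lemma ext_free_van {ι : Type*} [Fintype ι] (b : Module.Basis ι R K) {i : ℕ}
    (h : Subsingleton (EX R X R i)) : Subsingleton (EX R X K i) :=
  subsingleton_of_forall_eq 0 fun e => ext_basis b e fun _ => h.elim _ _

lemma comp_mk0_zero_of_mem {ι : Type*} [Fintype ι] (b : Module.Basis ι R K) (f : K →ₗ[R] R)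
    (hf : ∀ x, f x ∈ 𝔪) {i : ℕ} (e : EX R (R ⧸ 𝔪) K i) : e.comp (mk0 f) (add_zero i) = 0 := by
  have h1 : f = ∑ j, f (b j) • b.coord j := by
    apply b.ext
    intro l
    classical
    simp
  rw [h1, mk0_sum, Abelian.Ext.comp_sum]
  apply Finset.sum_eq_zero
  intro j _
  rw [mk0_smul, Abelian.Ext.comp_smul]
  exact smul_eq_zero_left (fun a => k_killed _ (hf _) a) _

lemma comp_mk0_zero {κ : Type u} [Fintype κ] {ι : Type*} [Fintype ι] (b : Module.Basis ι R K)
    (f : K →ₗ[R] (κ → R))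
    (hf : ∀ x j, f x j ∈ 𝔪) {i : ℕ} (e : EX R (R ⧸ 𝔪) K i) : e.comp (mk0 f) (add_zero i) = 0 := by
  apply ext_basis (Pi.basisFun R κ)
  intro j
  rw [comp_comp_mk0]
  apply comp_mk0_zero_of_mem b
  intro x
  simpa using hf x j

lemma free_ext_van {ι : Type u} [Fintype ι] {N : Type u} [AddCommGroup N] [Module R N] {i : ℕ} (hi : 0 < i) :
    Subsingleton (EX R (ι → R) N i) := by
  obtain ⟨i, rfl⟩ : ∃ l, i = l + 1 := ⟨i - 1, by omega⟩
  have : Projective (ModuleCat.of R (ι → R)) := ModuleCat.projective_of_free (Pi.basisFun R ι)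
  exact subsingleton_of_forall_eq 0 fun e => Abelian.Ext.eq_zero_of_projective e

lemma ab (d : ℕ) (hlow : ∀ i < d + 1, Subsingleton (EX R (R ⧸ 𝔪) R i))
    (htop : ¬ Subsingleton (EX R (R ⧸ 𝔪) R (d + 1))) (n : ℕ) :
    ∀ (M : Type u) [AddCommGroup M] [Module R M] [Module.Finite R M],
    (∀ (N : Type u) [AddCommGroup N] [Module R N] (i : ℕ), n < i → Subsingleton (EX R M N i)) →
    (∀ i < d + 1, Subsingleton (EX R (R ⧸ 𝔪) M i)) → Module.Free R M := by
  induction n with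
  | zero =>
    intro M _ _ _ h _
    have h1 : Projective (ModuleCat.of R M) := projective_iff_subsingleton_ext_one.2
      fun Y => h Y 1 (by omega)
    have h2 : Module.Projective R M := (IsProjective.iff_projective M).2 h1
    exact Module.free_of_flat_of_isLocalRing
  | succ n ih =>
    intro M _ _ _ h hk
    obtain ⟨ι, _, f, hf, hfm⟩ := mincover (R := R) M
    have hi := Submodule.subtype_injective (LinearMap.ker f)
    have hex : Function.Exact (LinearMap.ker f).subtype f := LinearMap.exact_subtype_ker_map f
    have hF : ∀ i < d + 1, Subsingleton (EX R (R ⧸ 𝔪) (ι → R) i) := fun i hi =>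
      ext_free_van (Pi.basisFun R ι) (hlow i hi)
    have hfree : Module.Free R (LinearMap.ker f) := by
      apply ih
      · intro N _ _ i hni
        exact vA hi hex hf (free_ext_van (by omega)) (h N _ (by omega))
      · intro i hid
        cases i with
        | zero => exact cA0 hi (hF 0 hid)
        | succ i => exact cA hi hex hf (hk i (by omega)) (hF _ hid)
    have b := Module.Free.chooseBasis R (LinearMap.ker f)
    have hz : Subsingleton (EX R (R ⧸ 𝔪) (LinearMap.ker f) (d + 1)) := by
      refine subsingleton_of_forall_eq 0 fun e => ?_
      obtain ⟨y, rfl⟩ := Abelian.Ext.covariant_sequence_exact₁ _ (ses hi hex hf) e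
        (comp_mk0_zero b _ (fun x j => hfm x x.2 j) e) rfl
      rw [(hk d (by omega)).elim y 0]; simp
    have hemp : IsEmpty (Module.Free.ChooseBasisIndex R (LinearMap.ker f)) := by
      by_contra hne
      rw [not_isEmpty_iff] at hne
      obtain ⟨j⟩ := hne
      apply htop
      refine subsingleton_of_forall_eq 0 fun e => ?_
      have h1 : e.comp (mk0 (LinearMap.id : R →ₗ[R] R)) (add_zero _) = e := by
        have := comp_mk0_smul_id (1 : R) e
        simpa using this
      have h2 : (LinearMap.id : R →ₗ[R] R) = b.coord j ∘ₗ LinearMap.toSpanSingleton R _ (b j) := by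
        ext; simp
      rw [← h1, h2, ← comp_comp_mk0, hz.elim (e.comp _ _) 0, Abelian.Ext.zero_comp]
    have hsub : Subsingleton (LinearMap.ker f) := b.repr.toEquiv.subsingleton
    have hinj : Function.Injective f := by
      rw [← LinearMap.ker_eq_bot]; exact Submodule.eq_bot_of_subsingleton
    exact Module.Free.of_equiv (LinearEquiv.ofBijective f ⟨hinj, hf⟩)

end P5a
end Syz
end fileP5a

section fileP5b
set_option linter.unusedSectionVars false
open CategoryTheory Pointwise

namespace Syz

section P5b
variable {R : Type u} [CommRing R] [IsLocalRing R] [IsNoetherianRing R]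

local notation "𝔪" => IsLocalRing.maximalIdeal R

/-- nonzero and one-dimensional over the residue field -/
def Cyc (M : Type u) [AddCommGroup M] [Module R M] (i : ℕ) : Prop :=
  ∃ e0 : EX R (R ⧸ 𝔪) M i, e0 ≠ 0 ∧ ∀ e, ∃ c : R, e = c • e0

lemma Cyc.shift {A B C : Type u} [AddCommGroup A] [Module R A] [AddCommGroup B] [Module R B]
    [AddCommGroup C] [Module R C] {f : A →ₗ[R] B} {g : B →ₗ[R] C} (hf : Function.Injective f)
    (hfg : Function.Exact f g) (hg : Function.Surjective g) {i : ℕ}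
    (h : Cyc (R := R) C i) (hB : Subsingleton (EX R (R ⧸ 𝔪) B i))
    (hz : ∀ e : EX R (R ⧸ 𝔪) A (i + 1), e.comp (mk0 f) (add_zero _) = 0) : Cyc (R := R) A (i + 1) := by
  obtain ⟨e0, h0, hc⟩ := h
  refine ⟨e0.comp (ses hf hfg hg).extClass rfl, ?_, ?_⟩
  · intro h
    apply h0
    obtain ⟨y, rfl⟩ := Abelian.Ext.covariant_sequence_exact₃ _ (ses hf hfg hg) e0 rfl h
    rw [hB.elim y 0]; simp
  · intro e
    obtain ⟨y, rfl⟩ := Abelian.Ext.covariant_sequence_exact₁ _ (ses hf hfg hg) e (hz e) rfl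
    obtain ⟨c, rfl⟩ := hc y
    exact ⟨c, by rw [Abelian.Ext.smul_comp]⟩

lemma Cyc.unique {M : Type u} [AddCommGroup M] [Module R M] {d : ℕ} (h : Cyc (R := R) M d)
    (htop : ¬ Subsingleton (EX R (R ⧸ 𝔪) R d)) {ι : Type*} [Finite ι] (b : Module.Basis ι R M) :
    ∃ j, ∀ l : ι, l = j := by
  have := Fintype.ofFinite ι
  obtain ⟨e0, h0, hc⟩ := h
  have hne : Nonempty ι := by
    by_contra hne
    rw [not_nonempty_iff] at hne
    exact h0 (ext_basis b e0 fun j => hne.elim j)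
  obtain ⟨j⟩ := hne
  refine ⟨j, fun l => ?_⟩
  by_contra hlj
  obtain ⟨η, hη⟩ : ∃ η : EX R (R ⧸ 𝔪) R d, η ≠ 0 := by
    by_contra! hall
    exact htop (subsingleton_of_forall_eq 0 hall)
  have hid : η.comp (mk0 (LinearMap.id : R →ₗ[R] R)) (add_zero _) = η := by
    have := comp_mk0_smul_id (1 : R) η
    simpa using this
  let E : ι → EX R (R ⧸ 𝔪) M d := fun j =>
    η.comp (mk0 (LinearMap.toSpanSingleton R _ (b j))) (add_zero _)
  have h1 : ∀ j, (E j).comp (mk0 (b.coord j)) (add_zero _) = η := by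
    intro j
    have h2 : (LinearMap.id : R →ₗ[R] R) = b.coord j ∘ₗ LinearMap.toSpanSingleton R _ (b j) := by
      ext; simp
    rw [comp_comp_mk0, ← h2, hid]
  have h2 : (E j).comp (mk0 (b.coord l)) (add_zero _) = 0 := by
    have h2 : b.coord l ∘ₗ LinearMap.toSpanSingleton R _ (b j) = 0 := by
      ext; simp [Ne.symm hlj]
    rw [comp_comp_mk0, h2, mk0_zero, Abelian.Ext.comp_zero]
  obtain ⟨c, hcj⟩ := hc (E j)
  obtain ⟨c', hcl⟩ := hc (E l)
  have hcu : IsUnit c := by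
    by_contra hcu
    have : c ∈ 𝔪 := hcu
    rw [smul_eq_zero_left (fun a => k_killed _ this a)] at hcj
    apply hη
    rw [← h1 j, hcj, Abelian.Ext.zero_comp]
  obtain ⟨w, rfl⟩ := hcu
  apply hη
  have h3 : e0 = (↑w⁻¹ : R) • E j := by
    rw [hcj, smul_smul, Units.inv_mul, one_smul]
  rw [← h1 l, hcl, h3, Abelian.Ext.smul_comp, Abelian.Ext.smul_comp, h2, smul_zero, smul_zero]

lemma partIV (I : Ideal R) (s : ℕ) (hlow : ∀ i < s + 3, Subsingleton (EX R (R ⧸ 𝔪) R i))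
    (htop : ¬ Subsingleton (EX R (R ⧸ 𝔪) R (s + 3)))
    (hS : ∀ i < s, Subsingleton (EX R (R ⧸ 𝔪) (R ⧸ I) i)) (hSc : Cyc (R := R) (R ⧸ I) s)
    (n : ℕ) (hpd : ∀ (N : Type u) [AddCommGroup N] [Module R N] (i : ℕ), n < i →
      Subsingleton (EX R I N i)) :
    ∃ (ι κ : Type u) (_ : Fintype ι) (_ : Fintype κ) (d : (ι → R) →ₗ[R] R) (φ : (κ → R) →ₗ[R] (ι → R))
      (ψ : κ → R), Res I d φ ψ ∧ ∀ g, φ g ∈ (𝔪 • ⊤ : Submodule R (ι → R)) := by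
  classical
  have i0 : Function.Injective I.subtype := Submodule.subtype_injective I
  have x0 : Function.Exact I.subtype I.mkQ := by
    intro x; simpa using! Ideal.Quotient.eq_zero_iff_mem
  have s0 : Function.Surjective I.mkQ := Submodule.mkQ_surjective I
  obtain ⟨ι, _, f, s1, m1⟩ := mincover (R := R) I
  have i1 := Submodule.subtype_injective (LinearMap.ker f)
  have x1 : Function.Exact (LinearMap.ker f).subtype f := LinearMap.exact_subtype_ker_map f
  obtain ⟨κ, _, g, s2, m2⟩ := mincover (R := R) (LinearMap.ker f)
  have i2 := Submodule.subtype_injective (LinearMap.ker g)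
  have x2 : Function.Exact (LinearMap.ker g).subtype g := LinearMap.exact_subtype_ker_map g
  have hF : ∀ i < s + 3, Subsingleton (EX R (R ⧸ 𝔪) (ι → R) i) := fun i hi =>
      ext_free_van (Pi.basisFun R ι) (hlow i hi)
  have hG : ∀ i < s + 3, Subsingleton (EX R (R ⧸ 𝔪) (κ → R) i) := fun i hi =>
      ext_free_van (Pi.basisFun R κ) (hlow i hi)
  have l1 : ∀ i < s + 1, Subsingleton (EX R (R ⧸ 𝔪) I i) := by
    intro i hi
    cases i with
    | zero => exact cA0 i0 (hlow 0 (by omega))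
    | succ i => exact cA i0 x0 s0 (hS i (by omega)) (hlow _ (by omega))
  have l2 : ∀ i < s + 2, Subsingleton (EX R (R ⧸ 𝔪) (LinearMap.ker f) i) := by
    intro i hi
    cases i with
    | zero => exact cA0 i1 (hF 0 (by omega))
    | succ i => exact cA i1 x1 s1 (l1 i (by omega)) (hF _ (by omega))
  have l3 : ∀ i < s + 3, Subsingleton (EX R (R ⧸ 𝔪) (LinearMap.ker g) i) := by
    intro i hi
    cases i with
    | zero => exact cA0 i2 (hG 0 (by omega))
    | succ i => exact cA i2 x2 s2 (l2 i (by omega)) (hG _ (by omega))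
  have hfree : Module.Free R (LinearMap.ker g) := by
    apply ab (s + 2) hlow htop n
    · intro N _ _ i hi
      refine vA i2 x2 s2 (free_ext_van (by omega)) ?_
      exact vA i1 x1 s1 (free_ext_van (by omega)) (hpd N _ (by omega))
    · exact l3
  have b := Module.Free.chooseBasis R (LinearMap.ker g)
  have c1 : Cyc (R := R) I (s + 1) := hSc.shift i0 x0 s0 (hlow s (by omega))
    fun e => (hlow (s + 1) (by omega)).elim _ _
  have c2 : Cyc (R := R) (LinearMap.ker f) (s + 2) := c1.shift i1 x1 s1 (hF (s + 1) (by omega))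
    fun e => (hF (s + 2) (by omega)).elim _ _
  have c3 : Cyc (R := R) (LinearMap.ker g) (s + 3) := c2.shift i2 x2 s2 (hG (s + 2) (by omega))
    fun e => comp_mk0_zero b _ (fun x j => m2 x x.2 j) e
  obtain ⟨j, hj⟩ := c3.unique htop b
  refine ⟨ι, κ, inferInstance, inferInstance, I.subtype ∘ₗ f, (LinearMap.ker f).subtype ∘ₗ g, b j,
    ⟨?_, ?_, ?_, ?_, ?_, ?_⟩, ?_⟩
  · rw [LinearMap.range_comp, LinearMap.range_eq_top.2 s1, Submodule.map_top, Submodule.range_subtype]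
  · intro y
    have : f (g y) = 0 := (g y).2
    simp [this]
  · intro y hy
    have hy' : f y = 0 := i0 (by simpa using hy)
    obtain ⟨z, hz⟩ := s2 ⟨y, hy'⟩
    exact ⟨z, by simp [hz]⟩
  · have : g (b j) = 0 := (b j).2
    simp [this]
  · intro y hy
    have hy' : g y = 0 := i1 (by simpa using hy)
    refine ⟨b.repr ⟨y, hy'⟩ j, ?_⟩
    have h1 := b.sum_repr ⟨y, hy'⟩
    rw [Finset.sum_eq_single j (fun l _ hl => absurd (hj l) hl) (by simp)] at h1
    have h2 := congrArg Subtype.val h1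
    simpa using h2.symm
  · intro r hr
    have h1 : r • b j = 0 := Subtype.ext (by simpa using hr)
    have h2 := congrArg (b.coord j) h1
    simpa using h2
  · intro y
    have h1 := m1 (g y) (g y).2
    rw [show ((LinearMap.ker f).subtype ∘ₗ g) y = (g y : ι → R) from rfl,
      pi_eq_sum_univ' (g y : ι → R)]
    refine Submodule.sum_mem _ fun l _ => Submodule.smul_mem_smul (h1 l) trivial

end P5b
end Syz
end fileP5b

/-- Let `R` be a Gorenstein Noetherian local ring and `I` an ideal of height `3` which has
finite projective dimension as an `R`-module, is generically a complete intersection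
(localized at each associated prime of `I`, it is generated by a regular sequence), and
such that `R ⧸ I` is Gorenstein. Then `I` is syzygetic. -/
theorem isSyzygetic_of_gorenstein_height_three
    (R : Type u) [CommRing R] [IsNoetherianRing R] [IsLocalRing R]
    (hR : IsGorensteinLocalRing R) (I : Ideal R)
    (hht : idealHeight I = 3)
    (hpd : ∃ n : ℕ, projectiveDimensionLE R (ModuleCat.of R I) n)
    (hgci : ∀ (p : Ideal R) (hp : p ∈ associatedPrimes R (R ⧸ I)),
      haveI : p.IsPrime := hp.isPrime
      ∃ rs : List (Localization.AtPrime p),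
        RingTheory.Sequence.IsRegular (Localization.AtPrime p) rs ∧
          Ideal.span {a | a ∈ rs} = I.map (algebraMap R (Localization.AtPrime p)))
    (hGor : IsGorensteinLocalRing (R ⧸ I)) :
    I.IsSyzygetic := by
  haveI := hGor.2.1
  obtain ⟨-, -, nR, hnR⟩ := hR
  obtain ⟨-, -, nS, hnS⟩ := hGor
  obtain ⟨n, hn⟩ := hpd
  obtain ⟨s, ⟨a, b, c, hreg, ha, hb, hc⟩, hlow, htop, hS, hSc⟩ := Syz.partIII I nR nS
    (fun M _ _ i hi => Syz.bridge _ _ i (by omega) (hnR (ModuleCat.of R M) i hi))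
    (fun M _ _ i hi => Syz.bridge _ _ i (by omega) (hnS (ModuleCat.of (R ⧸ I) M) i hi))
    (fun p hp => by
      rw [← hht]
      exact iInf₂_le p hp)
    (fun m hm => by
      have h1 : (m : ℕ∞) ≤ idealHeight I := le_iInf₂ hm
      rw [hht] at h1
      exact_mod_cast h1)
  obtain ⟨ι, κ, _, _, d, φ, ψ, H, hmin⟩ := Syz.partIV I s hlow htop hS hSc n
    (fun N _ _ i hi => Syz.bridge _ _ i (by omega) (hn (ModuleCat.of R N) i hi))
  exact H.isSyz hreg ha hb hc hmin
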